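/- Let u be a monotone traveling wave solution of the balanced Allen-Cahn equation in the plane, and let C₁, C₂ be the constants in the logarithmic asymptotics of the two branches k₁, k₂ of its zero level set (k₁(y) = −(1/(2μ)) ln y + C₁ + o(1), k₂(y) = (1/(2μ)) ln y + C₂ + o(1) as y → ∞, with μ = √(F''(1))). Then the critical moving-plane position Λ := inf{ λ ∈ ℝ : u(2λ − x, y) > u(x,y) for all x > λ, y ∈ ℝ } satisfies Λ = (C₁ + C₂)/2. -/

import Mathlib

open Real Filter MeasureTheory Metric

noncomputable def pdx (u : ℝ → ℝ → ℝ) (x y : ℝ) : ℝ := deriv (fun t => u t y) x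

noncomputable def pdy (u : ℝ → ℝ → ℝ) (x y : ℝ) : ℝ := deriv (fun t => u x t) y

noncomputable def pdxx (u : ℝ → ℝ → ℝ) (x y : ℝ) : ℝ := deriv (fun t => pdx u t y) x

noncomputable def pdyy (u : ℝ → ℝ → ℝ) (x y : ℝ) : ℝ := deriv (fun t => pdy u x t) y

/-- `F` is a balanced double-well potential. -/
def BalancedDoubleWell (F : ℝ → ℝ) : Prop :=
  ContDiff ℝ 3 F ∧ deriv F (-1) = 0 ∧ deriv F 1 = 0 ∧
  0 < deriv (deriv F) (-1) ∧ 0 < deriv (deriv F) 1 ∧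
  (∀ s ∈ Set.Ioo (-1 : ℝ) 0, 0 < deriv F s) ∧
  (∀ s ∈ Set.Ioo (0 : ℝ) 1, deriv F s < 0) ∧
  F (-1) = 0 ∧ F 1 = 0

/-- `u` is a `C³` solution of `Δu + c uᵧ = F'(u)` on `ℝ²` with `|u| ≤ 1`
which is monotone in `y`. -/
def IsSolution (F : ℝ → ℝ) (c : ℝ) (u : ℝ → ℝ → ℝ) : Prop :=
  ContDiff ℝ 3 (fun p : ℝ × ℝ => u p.1 p.2) ∧
  (∀ x y : ℝ, pdxx u x y + pdyy u x y + c * pdy u x y = deriv F (u x y)) ∧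
  (∀ x y : ℝ, |u x y| ≤ 1) ∧
  (∀ x y : ℝ, 0 < pdy u x y)

/-- A monotone traveling wave solution connecting `-1` to `1`. -/
def IsTravelingWave (F : ℝ → ℝ) (c : ℝ) (u : ℝ → ℝ → ℝ) : Prop :=
  IsSolution F c u ∧
  (∀ x : ℝ, Tendsto (fun y => u x y) atTop (nhds 1)) ∧
  (∀ x : ℝ, Tendsto (fun y => u x y) atBot (nhds (-1)))

/-- `f` is continuous on the plane, with first and second pure partial derivatives
`fx, fxx, fy, fyy`. -/
structure PlaneJet (f fx fxx fy fyy : ℝ → ℝ → ℝ) : Prop where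
  cont : Continuous fun p : ℝ × ℝ => f p.1 p.2
  hx : ∀ x y, HasDerivAt (fun t => f t y) (fx x y) x
  hxx : ∀ x y, HasDerivAt (fun t => fx t y) (fxx x y) x
  hy : ∀ x y, HasDerivAt (fun t => f x t) (fy x y) y
  hyy : ∀ x y, HasDerivAt (fun t => fy x t) (fyy x y) y

namespace PlaneJet

variable {f fx fxx fy fyy g gx gxx gy gyy : ℝ → ℝ → ℝ}

theorem sub (hf : PlaneJet f fx fxx fy fyy) (hg : PlaneJet g gx gxx gy gyy) :
    PlaneJet (fun x y => f x y - g x y) (fun x y => fx x y - gx x y)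
      (fun x y => fxx x y - gxx x y) (fun x y => fy x y - gy x y)
      (fun x y => fyy x y - gyy x y) where
  cont := hf.cont.sub hg.cont
  hx x y := (hf.hx x y).sub (hg.hx x y)
  hxx x y := (hf.hxx x y).sub (hg.hxx x y)
  hy x y := (hf.hy x y).sub (hg.hy x y)
  hyy x y := (hf.hyy x y).sub (hg.hyy x y)

theorem neg (hf : PlaneJet f fx fxx fy fyy) :
    PlaneJet (fun x y => -f x y) (fun x y => -fx x y)
      (fun x y => -fxx x y) (fun x y => -fy x y) (fun x y => -fyy x y) where
  cont := hf.cont.neg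
  hx x y := (hf.hx x y).neg
  hxx x y := (hf.hxx x y).neg
  hy x y := (hf.hy x y).neg
  hyy x y := (hf.hyy x y).neg

theorem swap (hf : PlaneJet f fx fxx fy fyy) :
    PlaneJet (fun x y => f y x) (fun x y => fy y x) (fun x y => fyy y x)
      (fun x y => fx y x) (fun x y => fxx y x) where
  cont := hf.cont.comp (continuous_snd.prodMk continuous_fst)
  hx x y := hf.hy y x
  hxx x y := hf.hyy y x
  hy x y := hf.hx y x
  hyy x y := hf.hxx y x

theorem translate (hf : PlaneJet f fx fxx fy fyy) (a b : ℝ) :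
    PlaneJet (fun x y => f (x + a) (y + b)) (fun x y => fx (x + a) (y + b))
      (fun x y => fxx (x + a) (y + b)) (fun x y => fy (x + a) (y + b))
      (fun x y => fyy (x + a) (y + b)) where
  cont := hf.cont.comp ((continuous_fst.add continuous_const).prodMk
    (continuous_snd.add continuous_const))
  hx x y := (hf.hx (x + a) (y + b)).comp_add_const x a
  hxx x y := (hf.hxx (x + a) (y + b)).comp_add_const x a
  hy x y := (hf.hy (x + a) (y + b)).comp_add_const y b
  hyy x y := (hf.hyy (x + a) (y + b)).comp_add_const y b

theorem reflect (hf : PlaneJet f fx fxx fy fyy) (a : ℝ) :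
    PlaneJet (fun x y => f (a - x) y) (fun x y => -fx (a - x) y)
      (fun x y => fxx (a - x) y) (fun x y => fy (a - x) y)
      (fun x y => fyy (a - x) y) where
  cont := hf.cont.comp ((continuous_const.sub continuous_fst).prodMk continuous_snd)
  hx x y := (hf.hx (a - x) y).comp_const_sub a x
  hxx x y := by
    have h := ((hf.hxx (a - x) y).comp_const_sub a x).neg
    rw [neg_neg] at h
    exact h
  hy x y := hf.hy (a - x) y
  hyy x y := hf.hyy (a - x) y

end PlaneJet

/-- First and second order necessary conditions at a local minimum. -/
theorem IsLocalMin.deriv_eq_zero_and_second_nonneg {f f' : ℝ → ℝ} {f'' a : ℝ}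
    (hmin : IsLocalMin f a) (h1 : ∀ t, HasDerivAt f (f' t) t) (h2 : HasDerivAt f' f'' a) :
    f' a = 0 ∧ 0 ≤ f'' := by
  have hz : f' a = 0 := hmin.hasDerivAt_eq_zero (h1 a)
  refine ⟨hz, ?_⟩
  by_contra! hneg
  have hd : deriv f = f' := funext fun t => (h1 t).deriv
  have hmax : IsLocalMax f a := by
    apply isLocalMax_of_deriv_deriv_neg
    · rw [hd, h2.deriv]; exact hneg
    · rw [hd]; exact hz
    · exact (h1 a).continuousAt
  have heq : ∀ᶠ t in nhds a, f t = f a := by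
    filter_upwards [hmin, hmax] with t h h'
    exact le_antisymm h' h
  have hd0 : ∀ᶠ t in nhds a, f' t = 0 := by
    filter_upwards [heq.eventually_nhds] with t ht
    have : HasDerivAt f 0 t :=
      (hasDerivAt_const t (f a)).congr_of_eventuallyEq ht
    exact (h1 t).unique this
  have : HasDerivAt f' 0 a := (hasDerivAt_const a (0 : ℝ)).congr_of_eventuallyEq hd0
  exact hneg.ne (h2.unique this)

/-- The penalisation `√(1 + t²)`, with bounded first and second derivatives. -/
noncomputable def penalty (t : ℝ) : ℝ := √(1 + t ^ 2)

theorem penalty_nonneg (t : ℝ) : 0 ≤ penalty t := sqrt_nonneg _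

theorem abs_le_penalty (t : ℝ) : |t| ≤ penalty t := by
  apply Real.abs_le_sqrt; linarith

theorem one_le_penalty (t : ℝ) : 1 ≤ penalty t := by
  rw [penalty, Real.one_le_sqrt]; nlinarith

theorem penalty_sq (t : ℝ) : penalty t ^ 2 = 1 + t ^ 2 := by
  rw [penalty, Real.sq_sqrt]; positivity

theorem continuous_penalty : Continuous penalty := by
  unfold penalty; fun_prop

theorem hasDerivAt_penalty (t : ℝ) : HasDerivAt penalty (t / penalty t) t := by
  have h : HasDerivAt (fun t : ℝ => 1 + t ^ 2) (2 * t) t := by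
    simpa using ((hasDerivAt_id t).pow 2).const_add 1
  have := h.sqrt (by positivity)
  rwa [mul_div_mul_left _ _ two_ne_zero] at this

theorem hasDerivAt_penalty_deriv (t : ℝ) :
    HasDerivAt (fun t => t / penalty t) (1 / penalty t ^ 3) t := by
  have hp : penalty t ≠ 0 := by linarith [one_le_penalty t]
  have := (hasDerivAt_id t).div (hasDerivAt_penalty t) hp
  have hsq := penalty_sq t
  have e : (1 * penalty t - t * (t / penalty t)) / penalty t ^ 2 = 1 / penalty t ^ 3 := by
    field_simp
    linarith
  exact e ▸ this

theorem abs_penalty_deriv_le (t : ℝ) : |t / penalty t| ≤ 1 := by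
  have hp : 0 < penalty t := by linarith [one_le_penalty t]
  rw [abs_div, abs_of_pos hp, div_le_one hp]
  exact abs_le_penalty t

theorem penalty_second_le (t : ℝ) : 1 / penalty t ^ 3 ≤ 1 := by
  rw [div_le_one (by have := one_le_penalty t; positivity)]
  exact one_le_pow₀ (one_le_penalty t)

/-- A continuous function bounded below on a closed set of `ℝ³` attains its minimum after a
penalisation. -/
theorem exists_penalized_min {D : Set (ℝ × ℝ × ℝ)} (hD : IsClosed D) (hne : D.Nonempty)
    {f : ℝ × ℝ × ℝ → ℝ} (hf : Continuous f) {m : ℝ} (hm : ∀ p ∈ D, m ≤ f p)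
    {ε : ℝ} (hε : 0 < ε) :
    ∃ q ∈ D, ∀ p ∈ D, f q + ε * (penalty q.1 + penalty q.2.1 + penalty q.2.2) ≤
      f p + ε * (penalty p.1 + penalty p.2.1 + penalty p.2.2) := by
  obtain ⟨p₀, hp₀⟩ := hne
  have hcont : Continuous fun p : ℝ × ℝ × ℝ =>
      f p + ε * (penalty p.1 + penalty p.2.1 + penalty p.2.2) := by
    have h := continuous_penalty
    fun_prop
  refine hcont.continuousOn.exists_isMinOn' hD hp₀ ?_
  rw [eventually_inf_principal]
  set M := (f p₀ + ε * (penalty p₀.1 + penalty p₀.2.1 + penalty p₀.2.2) - m) / ε with hM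
  have hball : ∀ᶠ p : ℝ × ℝ × ℝ in cocompact (ℝ × ℝ × ℝ), M ≤ ‖p‖ :=
    tendsto_norm_cocompact_atTop.eventually_ge_atTop M
  filter_upwards [hball] with p hp hpD
  have h1 : ‖p‖ ≤ penalty p.1 + penalty p.2.1 + penalty p.2.2 := by
    have a1 := abs_le_penalty p.1
    have a2 := abs_le_penalty p.2.1
    have a3 := abs_le_penalty p.2.2
    have b1 := penalty_nonneg p.1
    have b2 := penalty_nonneg p.2.1
    have b3 := penalty_nonneg p.2.2
    rw [Prod.norm_def, Prod.norm_def]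
    simp only [Real.norm_eq_abs]
    refine max_le (by linarith) (max_le (by linarith) (by linarith))
  have h2 : ε * M ≤ ε * (penalty p.1 + penalty p.2.1 + penalty p.2.2) :=
    mul_le_mul_of_nonneg_left (hp.trans h1) hε.le
  have h3 : ε * M = f p₀ + ε * (penalty p₀.1 + penalty p₀.2.1 + penalty p₀.2.2) - m := by
    rw [hM]; field_simp
  linarith [hm p hpD]

namespace PlaneJet

variable {f fx fxx fy fyy : ℝ → ℝ → ℝ}

/-- Comparison in the doubled variable: a bounded function with bounded image under the operator
`∂xx + ∂yy + b ∂x + c ∂y` has controlled symmetric differences. -/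
theorem symmetric_difference_le (hf : PlaneJet f fx fxx fy fyy) {A B b c : ℝ} (hA : 0 < A)
    (hfA : ∀ x y, |f x y| ≤ A)
    (hL : ∀ x y, |fxx x y + fyy x y + b * fx x y + c * fy x y| ≤ B)
    (x y z : ℝ) (hz0 : 0 ≤ z) (hz1 : z ≤ 1) :
    f (x + z) y - f (x - z) y ≤ (2 * A + 2 * B) * (z * (2 - z)) := by
  have hB : 0 ≤ B := (abs_nonneg _).trans (hL 0 0)
  set K := 2 * A + 2 * B with hK
  by_contra! hcon
  let D : Set (ℝ × ℝ × ℝ) := {p | 0 ≤ p.2.2 ∧ p.2.2 ≤ 1}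
  have hD : IsClosed D :=
    (isClosed_le continuous_const (continuous_snd.comp continuous_snd)).inter
      (isClosed_le (continuous_snd.comp continuous_snd) continuous_const)
  let Φ : ℝ × ℝ × ℝ → ℝ := fun p =>
    K * (p.2.2 * (2 - p.2.2)) - (f (p.1 + p.2.2) p.2.1 - f (p.1 - p.2.2) p.2.1)
  have hΦ : Continuous Φ := by
    have h1 : Continuous fun p : ℝ × ℝ × ℝ => f (p.1 + p.2.2) p.2.1 :=
      hf.cont.comp (f := fun p : ℝ × ℝ × ℝ => (p.1 + p.2.2, p.2.1)) (by fun_prop)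
    have h2 : Continuous fun p : ℝ × ℝ × ℝ => f (p.1 - p.2.2) p.2.1 :=
      hf.cont.comp (f := fun p : ℝ × ℝ × ℝ => (p.1 - p.2.2, p.2.1)) (by fun_prop)
    exact (by fun_prop : Continuous fun p : ℝ × ℝ × ℝ => K * (p.2.2 * (2 - p.2.2))).sub
      (h1.sub h2)
  have hlow : ∀ p ∈ D, -(2 * A) ≤ Φ p := by
    rintro ⟨x, y, z⟩ ⟨h0, h1⟩
    simp only [Φ] at h0 h1 ⊢
    have e1 := abs_le.1 (hfA (x + z) y)
    have e2 := abs_le.1 (hfA (x - z) y)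
    have : 0 ≤ K * (z * (2 - z)) := by
      apply mul_nonneg (by positivity) (mul_nonneg h0 (by linarith))
    linarith [e1.2, e2.1]
  have hneg : Φ (x, y, z) < 0 := by simp only [Φ]; linarith
  set S := penalty x + penalty y + penalty z with hS
  have hSpos : 0 < S := by
    linarith [one_le_penalty x, one_le_penalty y, one_le_penalty z]
  obtain ⟨ε, hε, hε1, hε2⟩ : ∃ ε > 0, Φ (x, y, z) + ε * S < 0 ∧ ε * (2 + |b| + |c|) < K - 2 * B := by
    have hc' : 0 < 2 + |b| + |c| := by positivity
    have hKB : 0 < K - 2 * B := by rw [hK]; linarith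
    have e1 : ∀ᶠ ε in nhdsWithin (0 : ℝ) (Set.Ioi 0), Φ (x, y, z) + ε * S < 0 := by
      have : Tendsto (fun ε : ℝ => Φ (x, y, z) + ε * S) (nhdsWithin 0 (Set.Ioi 0))
          (nhds (Φ (x, y, z) + 0 * S)) :=
        (Continuous.tendsto (by fun_prop) 0).mono_left nhdsWithin_le_nhds
      exact this.eventually_lt_const (by simpa using hneg)
    have e2 : ∀ᶠ ε in nhdsWithin (0 : ℝ) (Set.Ioi 0), ε * (2 + |b| + |c|) < K - 2 * B := by
      have : Tendsto (fun ε : ℝ => ε * (2 + |b| + |c|)) (nhdsWithin 0 (Set.Ioi 0))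
          (nhds (0 * (2 + |b| + |c|))) :=
        (Continuous.tendsto (by fun_prop) 0).mono_left nhdsWithin_le_nhds
      exact this.eventually_lt_const (by simpa using hKB)
    obtain ⟨ε, h⟩ := (e1.and (e2.and self_mem_nhdsWithin)).exists
    exact ⟨ε, h.2.2, h.1, h.2.1⟩
  obtain ⟨⟨x₁, y₁, z₁⟩, ⟨hq0, hq1⟩, hmin⟩ :=
    exists_penalized_min hD ⟨(x, y, z), hz0, hz1⟩ hΦ hlow hε
  simp only at hq0 hq1 hmin
  have hqneg : Φ (x₁, y₁, z₁) < 0 := by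
    have h := hmin (x, y, z) ⟨hz0, hz1⟩
    simp only at h
    have : 0 ≤ ε * (penalty x₁ + penalty y₁ + penalty z₁) := by
      have := penalty_nonneg x₁
      have := penalty_nonneg y₁
      have := penalty_nonneg z₁
      positivity
    linarith
  have hz0' : 0 < z₁ := by
    rcases hq0.lt_or_eq with h | h
    · exact h
    · exfalso
      simp only [Φ, ← h] at hqneg
      simp at hqneg
  have hz1' : z₁ < 1 := by
    rcases hq1.lt_or_eq with h | h
    · exact h
    · exfalso
      simp only [Φ, h] at hqneg
      have e1 := abs_le.1 (hfA (x₁ + 1) y₁)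
      have e2 := abs_le.1 (hfA (x₁ - 1) y₁)
      linarith [e1.2, e2.1]
  -- the necessary conditions in the three directions
  have tx := IsLocalMin.deriv_eq_zero_and_second_nonneg (a := x₁)
    (f := fun t => K * (z₁ * (2 - z₁)) - (f (t + z₁) y₁ - f (t - z₁) y₁) +
      ε * (penalty t + penalty y₁ + penalty z₁))
    (f' := fun t => -(fx (t + z₁) y₁ - fx (t - z₁) y₁) + ε * (t / penalty t))
    (f'' := -(fxx (x₁ + z₁) y₁ - fxx (x₁ - z₁) y₁) + ε * (1 / penalty x₁ ^ 3))
    (Eventually.of_forall fun t => hmin (t, y₁, z₁) ⟨hq0, hq1⟩)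
    (fun t => ((((hf.hx _ y₁).comp_add_const t z₁).sub
      ((hf.hx _ y₁).comp_sub_const t z₁)).const_sub _).add
      ((((hasDerivAt_penalty t).add_const _).add_const _).const_mul ε))
    ((((hf.hxx _ y₁).comp_add_const x₁ z₁).sub
      ((hf.hxx _ y₁).comp_sub_const x₁ z₁)).neg.add
      ((hasDerivAt_penalty_deriv x₁).const_mul ε))
  have ty := IsLocalMin.deriv_eq_zero_and_second_nonneg (a := y₁)
    (f := fun t => K * (z₁ * (2 - z₁)) - (f (x₁ + z₁) t - f (x₁ - z₁) t) +
      ε * (penalty x₁ + penalty t + penalty z₁))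
    (f' := fun t => -(fy (x₁ + z₁) t - fy (x₁ - z₁) t) + ε * (t / penalty t))
    (f'' := -(fyy (x₁ + z₁) y₁ - fyy (x₁ - z₁) y₁) + ε * (1 / penalty y₁ ^ 3))
    (Eventually.of_forall fun t => hmin (x₁, t, z₁) ⟨hq0, hq1⟩)
    (fun t => (((hf.hy _ t).sub (hf.hy _ t)).const_sub _).add
      ((((hasDerivAt_penalty t).const_add _).add_const _).const_mul ε))
    (((hf.hyy _ y₁).sub (hf.hyy _ y₁)).neg.add
      ((hasDerivAt_penalty_deriv y₁).const_mul ε))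
  have hquad : ∀ t : ℝ, HasDerivAt (fun t : ℝ => K * (t * (2 - t))) (K * (2 - 2 * t)) t := by
    intro t
    exact (((hasDerivAt_id t).mul ((hasDerivAt_id t).const_sub 2)).const_mul K).congr_deriv
      (by simp only [id]; ring)
  have hquad' : ∀ t : ℝ, HasDerivAt (fun t : ℝ => K * (2 - 2 * t)) (-2 * K) t := by
    intro t
    exact ((((hasDerivAt_id t).const_mul 2).const_sub 2).const_mul K).congr_deriv (by ring)
  have tz := IsLocalMin.deriv_eq_zero_and_second_nonneg (a := z₁)
    (f := fun t => K * (t * (2 - t)) - (f (x₁ + t) y₁ - f (x₁ - t) y₁) +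
      ε * (penalty x₁ + penalty y₁ + penalty t))
    (f' := fun t => K * (2 - 2 * t) - (fx (x₁ + t) y₁ - -fx (x₁ - t) y₁) + ε * (t / penalty t))
    (f'' := -2 * K - (fxx (x₁ + z₁) y₁ - - -fxx (x₁ - z₁) y₁) + ε * (1 / penalty z₁ ^ 3))
    (by
      filter_upwards [Ioo_mem_nhds hz0' hz1'] with t ht
      exact hmin (x₁, y₁, t) ⟨ht.1.le, ht.2.le⟩)
    (fun t => ((hquad t).sub (((hf.hx _ y₁).comp_const_add x₁ t).sub
      ((hf.hx _ y₁).comp_const_sub x₁ t))).add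
      (((hasDerivAt_penalty t).const_add _).const_mul ε))
    (((hquad' z₁).sub (((hf.hxx _ y₁).comp_const_add x₁ z₁).sub
      ((hf.hxx _ y₁).comp_const_sub x₁ z₁).neg)).add
      ((hasDerivAt_penalty_deriv z₁).const_mul ε))
  obtain ⟨tx1, tx2⟩ := tx
  obtain ⟨ty1, ty2⟩ := ty
  have tz2 := tz.2
  have l1 := (abs_le.1 (hL (x₁ + z₁) y₁)).1
  have l2 := (abs_le.1 (hL (x₁ - z₁) y₁)).2
  have px := mul_le_mul_of_nonneg_left (penalty_second_le x₁) hε.le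
  have py := mul_le_mul_of_nonneg_left (penalty_second_le y₁) hε.le
  have pz := mul_le_mul_of_nonneg_left (penalty_second_le z₁) hε.le
  have hbx : b * (ε * (x₁ / penalty x₁)) ≤ ε * |b| := by
    have h : |b * (ε * (x₁ / penalty x₁))| ≤ ε * |b| := by
      rw [abs_mul, abs_mul, abs_of_pos hε]
      have := mul_le_mul_of_nonneg_left (abs_penalty_deriv_le x₁)
        (mul_nonneg hε.le (abs_nonneg b))
      linarith
    exact (abs_le.1 h).2
  have hcy : c * (ε * (y₁ / penalty y₁)) ≤ ε * |c| := by
    have h : |c * (ε * (y₁ / penalty y₁))| ≤ ε * |c| := by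
      rw [abs_mul, abs_mul, abs_of_pos hε]
      have := mul_le_mul_of_nonneg_left (abs_penalty_deriv_le y₁)
        (mul_nonneg hε.le (abs_nonneg c))
      linarith
    exact (abs_le.1 h).2
  have ex : b * (fx (x₁ + z₁) y₁ - fx (x₁ - z₁) y₁) = b * (ε * (x₁ / penalty x₁)) := by
    rw [show fx (x₁ + z₁) y₁ - fx (x₁ - z₁) y₁ = ε * (x₁ / penalty x₁) by linarith]
  have ey : c * (fy (x₁ + z₁) y₁ - fy (x₁ - z₁) y₁) = c * (ε * (y₁ / penalty y₁)) := by
    rw [show fy (x₁ + z₁) y₁ - fy (x₁ - z₁) y₁ = ε * (y₁ / penalty y₁) by linarith]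
  linarith

theorem pdx_le (hf : PlaneJet f fx fxx fy fyy) {A B b c : ℝ} (hA : 0 < A)
    (hfA : ∀ x y, |f x y| ≤ A)
    (hL : ∀ x y, |fxx x y + fyy x y + b * fx x y + c * fy x y| ≤ B) (x y : ℝ) :
    fx x y ≤ 2 * A + 2 * B := by
  have hB : 0 ≤ B := (abs_nonneg _).trans (hL 0 0)
  have hd : HasDerivAt (fun z => f (x + z) y - f (x - z) y) (fx x y - -fx x y) 0 := by
    refine HasDerivAt.sub ?_ ?_
    · exact HasDerivAt.comp_const_add x 0 (by simpa using hf.hx x y)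
    · exact HasDerivAt.comp_const_sub x 0 (by simpa using hf.hx x y)
  have ht := hd.tendsto_slope_zero_right
  have hle : fx x y - -fx x y ≤ 2 * (2 * A + 2 * B) := by
    refine le_of_tendsto ht ?_
    filter_upwards [Ioo_mem_nhdsGT (zero_lt_one' ℝ)] with z hz
    have h := hf.symmetric_difference_le hA hfA hL x y z hz.1.le hz.2.le
    simp only [zero_add, add_zero, sub_zero, sub_self, smul_eq_mul]
    rw [inv_mul_le_iff₀ hz.1]
    have : 0 ≤ (2 * A + 2 * B) * z * z := by
      have := hz.1.le
      positivity
    nlinarith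
  linarith

/-- Global gradient bound in the first variable. -/
theorem abs_pdx_le (hf : PlaneJet f fx fxx fy fyy) {A B b c : ℝ} (hA : 0 < A)
    (hfA : ∀ x y, |f x y| ≤ A)
    (hL : ∀ x y, |fxx x y + fyy x y + b * fx x y + c * fy x y| ≤ B) (x y : ℝ) :
    |fx x y| ≤ 2 * A + 2 * B := by
  refine abs_le.2 ⟨?_, hf.pdx_le hA hfA hL x y⟩
  have := hf.neg.pdx_le (b := b) (c := c) (B := B) hA (fun x y => by rw [abs_neg]; exact hfA x y)
    (fun x y => by
      rw [← abs_neg]; convert hL x y using 2; ring) x y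
  linarith

end PlaneJet

theorem exists_pos_mul_lt_and_mul_lt {a b r s : ℝ} (hr : 0 < r) (hs : 0 < s) :
    ∃ ε > 0, ε * a < r ∧ ε * b < s := by
  have e1 : ∀ (a r : ℝ), 0 < r → ∀ᶠ ε in nhdsWithin (0 : ℝ) (Set.Ioi 0), ε * a < r := by
    intro a r hr
    have : Tendsto (fun ε : ℝ => ε * a) (nhdsWithin 0 (Set.Ioi 0)) (nhds (0 * a)) :=
      (Continuous.tendsto (by fun_prop) 0).mono_left nhdsWithin_le_nhds
    exact this.eventually_lt_const (by simpa using hr)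
  obtain ⟨ε, h⟩ := ((e1 a r hr).and ((e1 b s hs).and self_mem_nhdsWithin)).exists
  exact ⟨ε, h.2.2, h.1, h.2.1⟩

namespace PlaneJet

variable {w wx wxx wy wyy : ℝ → ℝ → ℝ}

/-- Maximum principle in a half-plane for bounded functions. -/
theorem nonneg_of_halfPlane (hw : PlaneJet w wx wxx wy wyy) {lam m A c : ℝ} (hm : 0 < m)
    (hA : ∀ x y, |w x y| ≤ A) (hbd : ∀ y, 0 ≤ w lam y)
    (hL : ∀ x y, lam < x → w x y < 0 → wxx x y + wyy x y + c * wy x y ≤ m * w x y)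
    (x y : ℝ) (hx : lam ≤ x) : 0 ≤ w x y := by
  by_contra! hneg
  set S := penalty x + penalty y + penalty 0 with hS
  obtain ⟨ε, hε, hε1, hε2⟩ : ∃ ε > 0, ε * S < -w x y / 2 ∧ ε * (2 + |c|) < m * (-w x y / 2) :=
    exists_pos_mul_lt_and_mul_lt (by linarith) (mul_pos hm (by linarith))
  let D : Set (ℝ × ℝ × ℝ) := {p | lam ≤ p.1 ∧ p.2.2 = 0}
  have hD : IsClosed D :=
    (isClosed_le continuous_const continuous_fst).inter
      (isClosed_eq (continuous_snd.comp continuous_snd) continuous_const)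
  have hcont : Continuous fun p : ℝ × ℝ × ℝ => w p.1 p.2.1 :=
    hw.cont.comp (f := fun p : ℝ × ℝ × ℝ => (p.1, p.2.1)) (by fun_prop)
  obtain ⟨⟨x₁, y₁, z₁⟩, ⟨hq, hz⟩, hmin⟩ :=
    exists_penalized_min hD ⟨(x, y, 0), hx, rfl⟩ hcont (m := -A)
      (fun p _ => (abs_le.1 (hA _ _)).1) hε
  simp only at hq hz hmin
  subst hz
  have hle : w x₁ y₁ < w x y / 2 := by
    have h := hmin (x, y, 0) ⟨hx, rfl⟩
    simp only at h
    have : 0 ≤ ε * (penalty x₁ + penalty y₁ + penalty 0) := by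
      have := penalty_nonneg x₁
      have := penalty_nonneg y₁
      have := penalty_nonneg 0
      positivity
    linarith
  have hq' : lam < x₁ := by
    rcases hq.lt_or_eq with h | h
    · exact h
    · exfalso
      have := hbd y₁
      rw [h] at this
      linarith
  obtain ⟨-, tx⟩ := IsLocalMin.deriv_eq_zero_and_second_nonneg (a := x₁)
    (f := fun t => w t y₁ + ε * (penalty t + penalty y₁ + penalty 0))
    (f' := fun t => wx t y₁ + ε * (t / penalty t))
    (f'' := wxx x₁ y₁ + ε * (1 / penalty x₁ ^ 3))
    (by
      filter_upwards [Ioi_mem_nhds hq'] with t ht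
      exact hmin (t, y₁, 0) ⟨le_of_lt ht, rfl⟩)
    (fun t => (hw.hx t y₁).add
      ((((hasDerivAt_penalty t).add_const _).add_const _).const_mul ε))
    ((hw.hxx x₁ y₁).add ((hasDerivAt_penalty_deriv x₁).const_mul ε))
  obtain ⟨ty1, ty2⟩ := IsLocalMin.deriv_eq_zero_and_second_nonneg (a := y₁)
    (f := fun t => w x₁ t + ε * (penalty x₁ + penalty t + penalty 0))
    (f' := fun t => wy x₁ t + ε * (t / penalty t))
    (f'' := wyy x₁ y₁ + ε * (1 / penalty y₁ ^ 3))
    (Eventually.of_forall fun t => hmin (x₁, t, 0) ⟨hq, rfl⟩)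
    (fun t => (hw.hy x₁ t).add
      ((((hasDerivAt_penalty t).const_add _).add_const _).const_mul ε))
    ((hw.hyy x₁ y₁).add ((hasDerivAt_penalty_deriv y₁).const_mul ε))
  have px := mul_le_mul_of_nonneg_left (penalty_second_le x₁) hε.le
  have py := mul_le_mul_of_nonneg_left (penalty_second_le y₁) hε.le
  have hcy : c * (ε * (y₁ / penalty y₁)) ≤ ε * |c| := by
    have h : |c * (ε * (y₁ / penalty y₁))| ≤ ε * |c| := by
      rw [abs_mul, abs_mul, abs_of_pos hε]
      have := mul_le_mul_of_nonneg_left (abs_penalty_deriv_le y₁)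
        (mul_nonneg hε.le (abs_nonneg c))
      linarith
    exact (abs_le.1 h).2
  have ey : c * wy x₁ y₁ = -(c * (ε * (y₁ / penalty y₁))) := by
    rw [show wy x₁ y₁ = -(ε * (y₁ / penalty y₁)) by linarith]; ring
  have hLq := hL x₁ y₁ hq' (by linarith)
  have := mul_lt_mul_of_pos_left hle hm
  linarith

/-- Positivity at the centre of a disk spreads to the whole open disk. -/
theorem pos_of_disk (hw : PlaneJet w wx wxx wy wyy) {K c : ℝ} (hK : 0 < K) {x₀ y₀ R : ℝ}
    (hR : 0 < R) (hnn : ∀ x y, (x - x₀) ^ 2 + (y - y₀) ^ 2 ≤ R ^ 2 → 0 ≤ w x y)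
    (hL : ∀ x y, (x - x₀) ^ 2 + (y - y₀) ^ 2 ≤ R ^ 2 →
      wxx x y + wyy x y + c * wy x y ≤ K * w x y)
    (hpos : 0 < w x₀ y₀) (x y : ℝ) (hxy : (x - x₀) ^ 2 + (y - y₀) ^ 2 < R ^ 2) :
    0 < w x y := by
  obtain ⟨r, hr, hrball⟩ : ∃ r > 0, ∀ x y, (x - x₀) ^ 2 + (y - y₀) ^ 2 ≤ r ^ 2 →
      w x₀ y₀ / 2 < w x y := by
    have h := (hw.cont.tendsto (x₀, y₀)).eventually_const_lt
      (show w x₀ y₀ / 2 < w x₀ y₀ by linarith)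
    obtain ⟨r, hr, h⟩ := Metric.eventually_nhds_iff.1 h
    refine ⟨r / 2, by linarith, fun x y hd => h (y := (x, y)) ?_⟩
    rw [Prod.dist_eq, max_lt_iff]
    constructor
    · rw [Real.dist_eq]
      refine lt_of_le_of_lt (abs_le_of_sq_le_sq ?_ (by linarith : (0 : ℝ) ≤ r / 2)) (by linarith)
      nlinarith [sq_nonneg (y - y₀)]
    · rw [Real.dist_eq]
      refine lt_of_le_of_lt (abs_le_of_sq_le_sq ?_ (by linarith : (0 : ℝ) ≤ r / 2)) (by linarith)
      nlinarith [sq_nonneg (x - x₀)]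
  set α := 1 + (5 + 2 * |c| * R + K) / (4 * r ^ 2) with hα
  have hα1 : 1 ≤ α := by rw [hα]; have : 0 ≤ (5 + 2 * |c| * R + K) / (4 * r ^ 2) := by positivity
                         linarith
  have hα2 : 5 + 2 * |c| * R + K ≤ 4 * α * r ^ 2 := by
    have e : 4 * α * r ^ 2 = 4 * r ^ 2 + (5 + 2 * |c| * R + K) := by
      rw [hα]; field_simp
    rw [e]; nlinarith [sq_nonneg r]
  set φ : ℝ → ℝ → ℝ := fun x y => exp (-α * ((x - x₀) ^ 2 + (y - y₀) ^ 2)) with hφ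
  set ω := exp (-α * R ^ 2) with hω
  set κ := w x₀ y₀ / 2 with hκ
  have hκ0 : 0 < κ := by rw [hκ]; linarith
  have hφpos : ∀ x y, 0 < φ x y := fun x y => exp_pos _
  have hφle : ∀ x y, φ x y ≤ 1 := by
    intro x y
    apply exp_le_one_iff.2
    nlinarith [sq_nonneg (x - x₀), sq_nonneg (y - y₀)]
  have hω0 : 0 < ω := exp_pos _
  have hqd : ∀ a t : ℝ, HasDerivAt (fun t : ℝ => (t - a) ^ 2) (2 * (t - a)) t := by
    intro a t
    exact (((hasDerivAt_id t).sub_const a).pow 2).congr_deriv (by simp)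
  have hld : ∀ a t : ℝ, HasDerivAt (fun t : ℝ => -2 * α * (t - a)) (-2 * α) t := by
    intro a t
    exact (((hasDerivAt_id t).sub_const a).const_mul (-2 * α)).congr_deriv (by simp)
  have hφx : ∀ x y, HasDerivAt (fun t => φ t y) (-2 * α * (x - x₀) * φ x y) x := by
    intro x y
    have := (((hqd x₀ x).add_const ((y - y₀) ^ 2)).const_mul (-α)).exp
    exact this.congr_deriv (by simp only [hφ]; ring)
  have hφy : ∀ x y, HasDerivAt (fun t => φ x t) (-2 * α * (y - y₀) * φ x y) y := by
    intro x y
    have := (((hqd y₀ y).const_add ((x - x₀) ^ 2)).const_mul (-α)).exp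
    exact this.congr_deriv (by simp only [hφ]; ring)
  have hφxx : ∀ x y, HasDerivAt (fun t => -2 * α * (t - x₀) * φ t y)
      ((4 * α ^ 2 * (x - x₀) ^ 2 - 2 * α) * φ x y) x := by
    intro x y
    exact ((hld x₀ x).mul (hφx x y)).congr_deriv (by ring)
  have hφyy : ∀ x y, HasDerivAt (fun t => -2 * α * (t - y₀) * φ x t)
      ((4 * α ^ 2 * (y - y₀) ^ 2 - 2 * α) * φ x y) y := by
    intro x y
    exact ((hld y₀ y).mul (hφy x y)).congr_deriv (by ring)
  let D : Set (ℝ × ℝ) := {p | (p.1 - x₀) ^ 2 + (p.2 - y₀) ^ 2 ≤ R ^ 2}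
  have hDc : IsCompact D := by
    apply Metric.isCompact_of_isClosed_isBounded
    · exact isClosed_le (by fun_prop) continuous_const
    · refine (Metric.isBounded_closedBall (x := (x₀, y₀)) (r := R)).subset ?_
      rintro ⟨x, y⟩ h
      simp only [D, Set.mem_ofPred_eq] at h
      rw [Metric.mem_closedBall, Prod.dist_eq, max_le_iff, Real.dist_eq, Real.dist_eq]
      exact ⟨abs_le_of_sq_le_sq (by nlinarith [sq_nonneg (y - y₀)]) hR.le,
        abs_le_of_sq_le_sq (by nlinarith [sq_nonneg (x - x₀)]) hR.le⟩
  have hφc : Continuous fun p : ℝ × ℝ => φ p.1 p.2 := by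
    simp only [hφ]; fun_prop
  obtain ⟨⟨x₁, y₁⟩, hq, hmin⟩ := hDc.exists_isMinOn ⟨(x, y), hxy.le⟩
    (f := fun p : ℝ × ℝ => w p.1 p.2 - κ * (φ p.1 p.2 - ω))
    (hw.cont.sub (continuous_const.mul (hφc.sub continuous_const))).continuousOn
  rw [isMinOn_iff] at hmin
  simp only [D, Set.mem_ofPred_eq] at hq
  have hkey : 0 ≤ w x₁ y₁ - κ * (φ x₁ y₁ - ω) := by
    by_contra! hneg
    have hout : r ^ 2 < (x₁ - x₀) ^ 2 + (y₁ - y₀) ^ 2 := by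
      by_contra! hin
      have h1 := hrball x₁ y₁ hin
      have : κ * (φ x₁ y₁ - ω) ≤ κ * 1 :=
        mul_le_mul_of_nonneg_left (by linarith [hφle x₁ y₁]) hκ0.le
      linarith
    have hin : (x₁ - x₀) ^ 2 + (y₁ - y₀) ^ 2 < R ^ 2 := by
      rcases hq.lt_or_eq with h | h
      · exact h
      · exfalso
        have : φ x₁ y₁ = ω := by simp only [hφ, hω, h]
        rw [this] at hneg
        have := hnn x₁ y₁ hq
        linarith
    obtain ⟨-, tx⟩ := IsLocalMin.deriv_eq_zero_and_second_nonneg (a := x₁)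
      (f := fun t => w t y₁ - κ * (φ t y₁ - ω))
      (f' := fun t => wx t y₁ - κ * (-2 * α * (t - x₀) * φ t y₁))
      (f'' := wxx x₁ y₁ - κ * ((4 * α ^ 2 * (x₁ - x₀) ^ 2 - 2 * α) * φ x₁ y₁))
      (by
        have : ∀ᶠ t in nhds x₁, (t - x₀) ^ 2 + (y₁ - y₀) ^ 2 < R ^ 2 :=
          (by fun_prop : Continuous fun t : ℝ => (t - x₀) ^ 2 + (y₁ - y₀) ^ 2).continuousAt
            |>.eventually_lt_const hin
        filter_upwards [this] with t ht
        exact hmin (t, y₁) ht.le)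
      (fun t => (hw.hx t y₁).sub (((hφx t y₁).sub_const ω).const_mul κ))
      ((hw.hxx x₁ y₁).sub ((hφxx x₁ y₁).const_mul κ))
    obtain ⟨ty1, ty2⟩ := IsLocalMin.deriv_eq_zero_and_second_nonneg (a := y₁)
      (f := fun t => w x₁ t - κ * (φ x₁ t - ω))
      (f' := fun t => wy x₁ t - κ * (-2 * α * (t - y₀) * φ x₁ t))
      (f'' := wyy x₁ y₁ - κ * ((4 * α ^ 2 * (y₁ - y₀) ^ 2 - 2 * α) * φ x₁ y₁))
      (by
        have : ∀ᶠ t in nhds y₁, (x₁ - x₀) ^ 2 + (t - y₀) ^ 2 < R ^ 2 :=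
          (by fun_prop : Continuous fun t : ℝ => (x₁ - x₀) ^ 2 + (t - y₀) ^ 2).continuousAt
            |>.eventually_lt_const hin
        filter_upwards [this] with t ht
        exact hmin (x₁, t) ht.le)
      (fun t => (hw.hy x₁ t).sub (((hφy x₁ t).sub_const ω).const_mul κ))
      ((hw.hyy x₁ y₁).sub ((hφyy x₁ y₁).const_mul κ))
    have hLq := hL x₁ y₁ hq
    have hwy : wy x₁ y₁ = κ * (-2 * α * (y₁ - y₀) * φ x₁ y₁) := by linarith
    rw [hwy] at hLq
    have hyR : c * (y₁ - y₀) ≤ |c| * R := by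
      have h1 : |y₁ - y₀| ≤ R :=
        abs_le_of_sq_le_sq (by nlinarith [sq_nonneg (x₁ - x₀)]) hR.le
      calc c * (y₁ - y₀) ≤ |c * (y₁ - y₀)| := le_abs_self _
        _ = |c| * |y₁ - y₀| := abs_mul _ _
        _ ≤ |c| * R := mul_le_mul_of_nonneg_left h1 (abs_nonneg c)
    have hcoef : K ≤ 4 * α ^ 2 * ((x₁ - x₀) ^ 2 + (y₁ - y₀) ^ 2) - 4 * α
        - 2 * α * (c * (y₁ - y₀)) := by
      have h1 : α * (4 * α * r ^ 2) ≤ α * (4 * α * ((x₁ - x₀) ^ 2 + (y₁ - y₀) ^ 2)) := by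
        gcongr
      have h2 : α * (5 + 2 * |c| * R + K) ≤ α * (4 * α * r ^ 2) := by gcongr
      have h3 : α * (c * (y₁ - y₀)) ≤ α * (|c| * R) := by gcongr
      have h4 : K ≤ α * K := le_mul_of_one_le_left hK.le hα1
      linarith
    have hκφ : 0 < κ * φ x₁ y₁ := mul_pos hκ0 (hφpos _ _)
    have h5 := mul_le_mul_of_nonneg_left hcoef hκφ.le
    have h6 : 0 < K * (κ * ω) := by positivity
    have h7 := mul_neg_of_pos_of_neg hK hneg
    linarith
  have h := hmin (x, y) hxy.le
  simp only at h
  have hφω : ω < φ x y := by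
    apply exp_lt_exp.2
    have : 0 < α := by linarith
    nlinarith
  have : 0 < κ * (φ x y - ω) := mul_pos hκ0 (by linarith)
  linarith

/-- Strong maximum principle in a half-plane. -/
theorem pos_of_halfPlane (hw : PlaneJet w wx wxx wy wyy) {lam K c : ℝ} (hK : 0 < K)
    (hnn : ∀ x y, lam ≤ x → 0 ≤ w x y)
    (hL : ∀ x y, lam ≤ x → wxx x y + wyy x y + c * wy x y ≤ K * w x y)
    {x₀ y₀ : ℝ} (hx₀ : lam < x₀) (hpos : 0 < w x₀ y₀) (x y : ℝ) (hx : lam < x) :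
    0 < w x y := by
  have disk : ∀ a b, lam < a → 0 < w a b → ∀ x y,
      (x - a) ^ 2 + (y - b) ^ 2 < (a - lam) ^ 2 → 0 < w x y := by
    intro a b ha hab x y hxy
    have hin : ∀ x y, (x - a) ^ 2 + (y - b) ^ 2 ≤ (a - lam) ^ 2 → lam ≤ x := by
      intro x y h
      have := (abs_le.1 (abs_le_of_sq_le_sq (a := x - a) (b := a - lam)
        (by nlinarith [sq_nonneg (y - b)]) (by linarith))).1
      linarith
    exact hw.pos_of_disk hK (by linarith : 0 < a - lam) (fun x y h => hnn x y (hin x y h))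
      (fun x y h => hL x y (hin x y h)) hab x y hxy
  set d := x₀ - lam with hd
  have hd0 : 0 < d := by rw [hd]; linarith
  have chain : ∀ n : ℕ, 0 < w (lam + d * (3 / 2) ^ n) y₀ := by
    intro n
    induction n with
    | zero => simpa [hd] using hpos
    | succ n ih =>
      have hp : 0 < d * (3 / 2) ^ n := by positivity
      refine disk _ _ (by linarith) ih _ _ ?_
      have e : lam + d * (3 / 2) ^ (n + 1) - (lam + d * (3 / 2) ^ n) =
          d * (3 / 2) ^ n / 2 := by ring
      rw [e]
      nlinarith
  obtain ⟨n, hn⟩ := pow_unbounded_of_one_lt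
    (((x - lam) ^ 2 + (y - y₀) ^ 2) / (x - lam) / d) (by norm_num : (1 : ℝ) < 3 / 2)
  refine disk _ _ ?_ (chain n) x y ?_
  · have : 0 < d * (3 / 2) ^ n := by positivity
    linarith
  · rw [div_lt_iff₀ hd0, div_lt_iff₀ (by linarith)] at hn
    have hp : 0 < d * (3 / 2) ^ n := by positivity
    have : 0 < x - lam := by linarith
    nlinarith

end PlaneJet

theorem abs_sub_le_of_abs_deriv_le {g g' : ℝ → ℝ} {C : ℝ} (hg : ∀ t, HasDerivAt g (g' t) t)
    (hC : ∀ t, |g' t| ≤ C) (a b : ℝ) : |g b - g a| ≤ C * |b - a| :=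
  convex_univ.norm_image_sub_le_of_norm_hasDerivWithin_le
    (fun t _ => (hg t).hasDerivWithinAt) (fun t _ => hC t) (Set.mem_univ a) (Set.mem_univ b)

theorem abs_increment_le_of_pos {g : ℝ → ℝ} {C : ℝ}
    (hg : ∀ x h, 0 < h → |g (x + h) - g x| ≤ C * h) (x h : ℝ) :
    |g (x + h) - g x| ≤ C * |h| := by
  rcases lt_trichotomy h 0 with hh | hh | hh
  · have := hg (x + h) (-h) (by linarith)
    rw [abs_of_neg hh, abs_sub_comm]
    simpa using this
  · simp [hh]
  · rw [abs_of_pos hh]; exact hg x h hh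

theorem abs_deriv_le_of_increment_le {g : ℝ → ℝ} {C g' x : ℝ} (hd : HasDerivAt g g' x)
    (hg : ∀ h, |g (x + h) - g x| ≤ C * |h|) : |g'| ≤ C := by
  have hC : 0 ≤ C := by
    have := (abs_nonneg _).trans (hg 1)
    simpa using this
  refine hd.le_of_lip' hC (Eventually.of_forall fun t => ?_)
  have := hg (t - x)
  simpa using this

theorem abs_taylor_le {g g' : ℝ → ℝ} {C : ℝ} (hg : ∀ t, HasDerivAt g (g' t) t)
    (hC : ∀ x h, |g' (x + h) - g' x| ≤ C * |h|) (x h : ℝ) :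
    |g (x + h) - g x - h * g' x| ≤ C * h ^ 2 := by
  have hC0 : 0 ≤ C := by
    have := (abs_nonneg _).trans (hC 0 1)
    simpa using this
  have key := (convex_uIcc x (x + h)).norm_image_sub_le_of_norm_hasDerivWithin_le
    (f := fun t => g t - t * g' x) (f' := fun t => g' t - g' x) (C := C * |h|)
    (fun t _ => ((hg t).sub (((hasDerivAt_id t).mul_const (g' x)).congr_deriv
      (one_mul _))).hasDerivWithinAt)
    (fun t ht => by
      have h1 := hC x (t - x)
      rw [add_sub_cancel] at h1
      refine h1.trans (mul_le_mul_of_nonneg_left ?_ hC0)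
      have := Set.abs_sub_left_of_mem_uIcc ht
      simpa using this)
    Set.left_mem_uIcc Set.right_mem_uIcc
  simp only [Real.norm_eq_abs, add_sub_cancel_left] at key
  calc |g (x + h) - g x - h * g' x| = |g (x + h) - (x + h) * g' x - (g x - x * g' x)| := by
        congr 1; ring
    _ ≤ C * |h| * |h| := key
    _ = C * h ^ 2 := by rw [mul_assoc, abs_mul_abs_self, sq]

/-- Global regularity in the first variable of bounded solutions of
`u_xx + u_yy + b u_x + c u_y = f u`. -/
theorem PlaneJet.exists_lipschitz_bound {u ux uxx uy uyy : ℝ → ℝ → ℝ}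
    (hu : PlaneJet u ux uxx uy uyy) {f f' : ℝ → ℝ} {B b c : ℝ}
    (hf : ∀ t, HasDerivAt f (f' t) t) (hB : ∀ t, |t| ≤ 1 → |f t| ≤ B)
    (hB1 : ∀ t, |t| ≤ 1 → |f' t| ≤ B)
    (hB2 : ∀ s t, |s| ≤ 1 → |t| ≤ 1 → |f' t - f' s| ≤ B * |t - s|)
    (hu1 : ∀ x y, |u x y| ≤ 1)
    (heq : ∀ x y, uxx x y + uyy x y + b * ux x y + c * uy x y = f (u x y)) :
    ∃ K, 0 < K ∧ (∀ x y, |ux x y| ≤ K) ∧ (∀ x y h, |ux (x + h) y - ux x y| ≤ K * |h|) ∧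
      (∀ x y h, |uxx (x + h) y - uxx x y| ≤ K * |h|) := by
  have hB0 : 0 ≤ B := (abs_nonneg _).trans (hB 0 (by simp))
  have hflip : ∀ s t, |s| ≤ 1 → |t| ≤ 1 → |f t - f s| ≤ B * |t - s| := by
    intro s t hs ht
    exact (convex_Icc (-1 : ℝ) 1).norm_image_sub_le_of_norm_hasDerivWithin_le
      (fun t _ => (hf t).hasDerivWithinAt) (fun t ht => hB1 t (abs_le.2 ht))
      (abs_le.1 hs) (abs_le.1 ht)
  set K₁ := 2 * 1 + 2 * B with hK₁
  have hK₁0 : 0 < K₁ := by positivity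
  have b1 : ∀ x y, |ux x y| ≤ K₁ := hu.abs_pdx_le one_pos hu1
    (fun x y => by rw [heq]; exact hB _ (hu1 x y))
  have l1 : ∀ x y h, |u (x + h) y - u x y| ≤ K₁ * |h| := by
    intro x y h
    have := abs_sub_le_of_abs_deriv_le (fun t => hu.hx t y) (fun t => b1 t y) x (x + h)
    simpa using this
  set K₂ := 2 * K₁ + 2 * (B * K₁) with hK₂
  have hK₂0 : 0 < K₂ := by positivity
  have jet : ∀ h : ℝ, PlaneJet (fun x y => u (x + h) y - u x y)
      (fun x y => ux (x + h) y - ux x y) (fun x y => uxx (x + h) y - uxx x y)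
      (fun x y => uy (x + h) y - uy x y) (fun x y => uyy (x + h) y - uyy x y) := by
    intro h
    simpa using (hu.translate h 0).sub hu
  have b2 : ∀ x y h, 0 < h → |ux (x + h) y - ux x y| ≤ K₂ * h := by
    intro x y h hh
    have key := (jet h).abs_pdx_le (A := K₁ * h) (B := B * (K₁ * h)) (b := b) (c := c)
      (by positivity)
      (fun x y => by simpa [abs_of_pos hh] using l1 x y h)
      (fun x y => by
        have e : uxx (x + h) y - uxx x y + (uyy (x + h) y - uyy x y) +
            b * (ux (x + h) y - ux x y) + c * (uy (x + h) y - uy x y) =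
            f (u (x + h) y) - f (u x y) := by
          rw [← heq, ← heq]; ring
        rw [e]
        refine (hflip _ _ (hu1 _ _) (hu1 _ _)).trans (mul_le_mul_of_nonneg_left ?_ hB0)
        simpa [abs_of_pos hh] using l1 x y h) x y
    linarith
  have l2 : ∀ x y h, |ux (x + h) y - ux x y| ≤ K₂ * |h| := fun x y h =>
    abs_increment_le_of_pos (g := fun t => ux t y) (fun x h hh => b2 x y h hh) x h
  set K₄ := B * K₁ * K₁ + B * K₂ with hK₄
  set K₃ := 2 * K₂ + 2 * K₄ with hK₃
  have hK₃0 : 0 < K₃ := by positivity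
  have l3 : ∀ x y h k, 0 < h → 0 < k →
      |ux (x + k + h) y - ux (x + k) y - (ux (x + h) y - ux x y)| ≤ K₃ * h * k := by
    intro x y h k hh hk
    have hjet : PlaneJet (fun x y => u (x + k + h) y - u (x + k) y - (u (x + h) y - u x y))
        (fun x y => ux (x + k + h) y - ux (x + k) y - (ux (x + h) y - ux x y))
        (fun x y => uxx (x + k + h) y - uxx (x + k) y - (uxx (x + h) y - uxx x y))
        (fun x y => uy (x + k + h) y - uy (x + k) y - (uy (x + h) y - uy x y))
        (fun x y => uyy (x + k + h) y - uyy (x + k) y - (uyy (x + h) y - uyy x y)) := by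
      simpa using ((jet h).translate k 0).sub (jet h)
    have key := hjet.abs_pdx_le (A := K₂ * h * k) (B := K₄ * h * k) (b := b) (c := c)
      (by positivity)
      (fun x y => by
        have := abs_sub_le_of_abs_deriv_le (fun t => (jet h).hx t y)
          (fun t => b2 t y h hh) x (x + k)
        simpa [abs_of_pos hk] using this)
      (fun x y => by
        have e : uxx (x + k + h) y - uxx (x + k) y - (uxx (x + h) y - uxx x y) +
            (uyy (x + k + h) y - uyy (x + k) y - (uyy (x + h) y - uyy x y)) +
            b * (ux (x + k + h) y - ux (x + k) y - (ux (x + h) y - ux x y)) +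
            c * (uy (x + k + h) y - uy (x + k) y - (uy (x + h) y - uy x y)) =
            f (u (x + k + h) y) - f (u (x + k) y) - (f (u (x + h) y) - f (u x y)) := by
          rw [← heq, ← heq, ← heq, ← heq]; ring
        rw [e]
        have hd : ∀ t, HasDerivAt (fun t => f (u (t + h) y) - f (u t y))
            (f' (u (t + h) y) * ux (t + h) y - f' (u t y) * ux t y) t := fun t =>
          ((hf _).comp t ((hu.hx (t + h) y).comp_add_const t h)).sub
            ((hf _).comp t (hu.hx t y))
        have := abs_sub_le_of_abs_deriv_le hd (C := K₄ * h) (fun t => by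
          have e : f' (u (t + h) y) * ux (t + h) y - f' (u t y) * ux t y =
              (f' (u (t + h) y) - f' (u t y)) * ux (t + h) y +
              f' (u t y) * (ux (t + h) y - ux t y) := by ring
          rw [e]
          refine (abs_add_le _ _).trans ?_
          rw [abs_mul, abs_mul]
          have c1 : |f' (u (t + h) y) - f' (u t y)| ≤ B * (K₁ * h) := by
            refine (hB2 _ _ (hu1 _ _) (hu1 _ _)).trans (mul_le_mul_of_nonneg_left ?_ hB0)
            simpa [abs_of_pos hh] using l1 t y h
          have c2 := mul_le_mul c1 (b1 (t + h) y) (abs_nonneg _) (by positivity)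
          have c3 := mul_le_mul (hB1 _ (hu1 t y)) (b2 t y h hh) (abs_nonneg _) hB0
          rw [hK₄]
          linarith) x (x + k)
        simpa [abs_of_pos hk] using this) x y
    rw [hK₃]
    linarith
  have b3 : ∀ x y h, 0 < h → |uxx (x + h) y - uxx x y| ≤ K₃ * h := by
    intro x y h hh
    exact abs_deriv_le_of_increment_le ((jet h).hxx x y)
      (abs_increment_le_of_pos (g := fun t => ux (t + h) y - ux t y)
        (fun x k hk => l3 x y h k hh hk) x)
  have l4 : ∀ x y h, |uxx (x + h) y - uxx x y| ≤ K₃ * |h| := fun x y h =>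
    abs_increment_le_of_pos (g := fun t => uxx t y) (fun x h hh => b3 x y h hh) x h
  refine ⟨K₁ + K₂ + K₃, by positivity, fun x y => (b1 x y).trans (by linarith),
    fun x y h => (l2 x y h).trans ?_, fun x y h => (l4 x y h).trans ?_⟩ <;>
  · apply mul_le_mul_of_nonneg_right _ (abs_nonneg h)
    linarith

theorem Ultrafilter.exists_tendsto_of_abs_le {ι : Type*} (𝒰 : Ultrafilter ι) {g : ι → ℝ} {C : ℝ}
    (hg : ∀ᶠ i in 𝒰, |g i| ≤ C) : ∃ l, Tendsto g 𝒰 (nhds l) := by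
  obtain ⟨l, -, hl⟩ := (isCompact_Icc (a := -C) (b := C)).ultrafilter_le_nhds (𝒰.map g)
    (by
      rw [le_principal_iff]
      exact hg.mono fun i hi => abs_le.1 hi)
  exact ⟨l, hl⟩

theorem hasDerivAt_of_abs_le_sq {g : ℝ → ℝ} {C g' x : ℝ}
    (hg : ∀ h, |g (x + h) - g x - h * g'| ≤ C * h ^ 2) : HasDerivAt g g' x := by
  rw [hasDerivAt_iff_isLittleO_nhds_zero]
  have h1 : (fun h : ℝ => g (x + h) - g x - h • g') =O[nhds 0] fun h : ℝ => h ^ 2 := by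
    refine Asymptotics.IsBigO.of_bound C (Eventually.of_forall fun h => ?_)
    simpa using hg h
  refine h1.trans_isLittleO ?_
  simpa using Asymptotics.isLittleO_pow_pow (𝕜 := ℝ) (m := 1) (n := 2) (by norm_num)

/-- A bounded solution of `u_xx + u_yy + c u_y = f u`, increasing in the second variable, together
with Lipschitz bounds for its derivatives. -/
structure RegularWave (f : ℝ → ℝ) (c K : ℝ) (u ux uxx uy uyy : ℝ → ℝ → ℝ) : Prop where
  jet : PlaneJet u ux uxx uy uyy
  pde : ∀ x y, uxx x y + uyy x y + c * uy x y = f (u x y)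
  bdd : ∀ x y, |u x y| ≤ 1
  mono : ∀ x, StrictMono (u x)
  pos : 0 < K
  abs_ux : ∀ x y, |ux x y| ≤ K
  lip_ux : ∀ x y h, |ux (x + h) y - ux x y| ≤ K * |h|
  lip_uxx : ∀ x y h, |uxx (x + h) y - uxx x y| ≤ K * |h|
  abs_uy : ∀ x y, |uy x y| ≤ K
  lip_uy : ∀ x y h, |uy x (y + h) - uy x y| ≤ K * |h|
  lip_uyy : ∀ x y h, |uyy x (y + h) - uyy x y| ≤ K * |h|

namespace RegularWave

variable {f : ℝ → ℝ} {c K : ℝ} {u ux uxx uy uyy : ℝ → ℝ → ℝ}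

theorem reflect (hu : RegularWave f c K u ux uxx uy uyy) (a : ℝ) :
    RegularWave f c K (fun x y => u (a - x) y) (fun x y => -ux (a - x) y)
      (fun x y => uxx (a - x) y) (fun x y => uy (a - x) y) (fun x y => uyy (a - x) y) where
  jet := hu.jet.reflect a
  pde x y := hu.pde (a - x) y
  bdd x y := hu.bdd (a - x) y
  mono x := hu.mono (a - x)
  pos := hu.pos
  abs_ux x y := by rw [abs_neg]; exact hu.abs_ux _ y
  lip_ux x y h := by
    have := hu.lip_ux (a - x) y (-h)
    rw [abs_neg] at this
    rw [← abs_neg]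
    convert this using 2
    rw [show a - (x + h) = a - x + -h by ring]; ring
  lip_uxx x y h := by
    have := hu.lip_uxx (a - x) y (-h)
    rw [abs_neg] at this
    rwa [show a - (x + h) = a - x + -h by ring]
  abs_uy x y := hu.abs_uy _ y
  lip_uy x y h := hu.lip_uy _ y h
  lip_uyy x y h := hu.lip_uyy _ y h

theorem lip_x (hu : RegularWave f c K u ux uxx uy uyy) (x x' y : ℝ) :
    |u x' y - u x y| ≤ K * |x' - x| :=
  abs_sub_le_of_abs_deriv_le (fun t => hu.jet.hx t y) (fun t => hu.abs_ux t y) x x'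

/-- Values along asymptotically equal abscissae have the same limit. -/
theorem tendsto_of_tendsto_sub (hu : RegularWave f c K u ux uxx uy uyy) {ι : Type*}
    {l : Filter ι} {X X' Y : ι → ℝ} {v : ℝ} (h : Tendsto (fun i => u (X i) (Y i)) l (nhds v))
    (hX : Tendsto (fun i => X' i - X i) l (nhds 0)) :
    Tendsto (fun i => u (X' i) (Y i)) l (nhds v) := by
  have h0 : Tendsto (fun i => u (X' i) (Y i) - u (X i) (Y i)) l (nhds 0) := by
    refine squeeze_zero_norm (a := fun i => K * |X' i - X i|) (fun i => hu.lip_x _ _ _) ?_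
    simpa using hX.abs.const_mul K
  simpa using h0.add h

/-- Limits along an ultrafilter of horizontal translates at heights `exp θ * Y`, with `Y → ∞`,
solve the one-dimensional equation for a dense set of `θ`. -/
theorem exists_dense_ode_limit (hu : RegularWave f c K u ux uxx uy uyy) (hf : Continuous f)
    {ι : Type*} (𝒰 : Ultrafilter ι) (X Y : ι → ℝ) (hY : Tendsto Y 𝒰 atTop) :
    ∃ a : ℝ → ℝ → ℝ,
      (∀ s θ, Tendsto (fun i => u (X i + s) (exp θ * Y i)) 𝒰 (nhds (a s θ))) ∧
      Dense {θ | ∃ P : ℝ → ℝ, (∀ s, HasDerivAt (fun t => a t θ) (P s) s) ∧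
        ∀ s, HasDerivAt P (f (a s θ)) s} := by
  have hex : ∀ s θ, ∃ l, Tendsto (fun i => u (X i + s) (exp θ * Y i)) 𝒰 (nhds l) := fun s θ =>
    𝒰.exists_tendsto_of_abs_le (Eventually.of_forall fun i => hu.bdd _ _)
  choose a ha using hex
  refine ⟨a, ha, ?_⟩
  have hYpos : ∀ᶠ i in (𝒰 : Filter ι), 0 < Y i := hY.eventually_gt_atTop 0
  have hmono : ∀ s, Monotone (a s) := by
    intro s θ θ' hθ
    refine le_of_tendsto_of_tendsto (ha s θ) (ha s θ') ?_
    filter_upwards [hYpos] with i hi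
    exact (hu.mono _).monotone (mul_le_mul_of_nonneg_right (exp_le_exp.2 hθ) hi.le)
  have hlip : ∀ s s' θ, |a s' θ - a s θ| ≤ K * |s' - s| := by
    intro s s' θ
    refine le_of_tendsto ((ha s' θ).sub (ha s θ)).abs (Eventually.of_forall fun i => ?_)
    have := hu.lip_x (X i + s) (X i + s') (exp θ * Y i)
    simpa using this
  -- heights at which all the monotone functions `a s` are continuous
  have hcount : (⋃ q : ℚ, {θ | ¬ContinuousAt (a (q : ℝ)) θ}).Countable :=
    Set.countable_iUnion fun q => (hmono q).countable_not_continuousAt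
  refine (hcount.dense_compl ℝ).mono ?_
  intro θ hθ
  have hθq : ∀ q : ℚ, ContinuousAt (a (q : ℝ)) θ := by
    intro q
    by_contra hq
    exact hθ (Set.mem_iUnion.2 ⟨q, hq⟩)
  have hcont : ∀ s, ContinuousAt (a s) θ := by
    intro s
    rw [Metric.continuousAt_iff']
    intro ε hε
    obtain ⟨q, hq⟩ := (Rat.denseRange_cast (𝕜 := ℝ)).exists_dist_lt s
      (show 0 < ε / (3 * K) from div_pos hε (by linarith [hu.pos]))
    rw [Real.dist_eq] at hq
    have hKq : K * |s - q| < ε / 3 := by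
      have := mul_lt_mul_of_pos_left hq hu.pos
      have e : K * (ε / (3 * K)) = ε / 3 := by have := hu.pos; field_simp
      linarith
    have hKq' : K * |(q : ℝ) - s| < ε / 3 := by rwa [abs_sub_comm]
    filter_upwards [(Metric.continuousAt_iff'.1 (hθq q)) (ε / 3) (by linarith)] with θ' h'
    rw [Real.dist_eq] at h' ⊢
    have e1 := hlip q s θ'
    have e2 := hlip s q θ
    calc |a s θ' - a s θ| = |(a s θ' - a q θ') + (a q θ' - a q θ) + (a q θ - a s θ)| := by
          congr 1; ring
      _ ≤ |a s θ' - a q θ'| + |a q θ' - a q θ| + |a q θ - a s θ| := abs_add_three _ _ _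
      _ < ε := by linarith
  -- at such heights the limit does not depend on the vertical shift
  have hshift : ∀ s τ, Tendsto (fun i => u (X i + s) (exp θ * Y i + τ)) 𝒰 (nhds (a s θ)) := by
    intro s τ
    obtain ⟨l, hl⟩ := 𝒰.exists_tendsto_of_abs_le (C := 1)
      (g := fun i => u (X i + s) (exp θ * Y i + τ)) (Eventually.of_forall fun i => hu.bdd _ _)
    have hup : ∀ η > 0, l ≤ a s (θ + η) := by
      intro η hη
      refine le_of_tendsto_of_tendsto hl (ha s (θ + η)) ?_
      have hpos : 0 < exp (θ + η) - exp θ := sub_pos.2 (exp_lt_exp.2 (by linarith))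
      filter_upwards [hY.eventually_ge_atTop (τ / (exp (θ + η) - exp θ))] with i hi
      apply (hu.mono _).monotone
      rw [div_le_iff₀ hpos] at hi
      linarith
    have hdown : ∀ η > 0, a s (θ - η) ≤ l := by
      intro η hη
      refine le_of_tendsto_of_tendsto (ha s (θ - η)) hl ?_
      have hpos : 0 < exp θ - exp (θ - η) := sub_pos.2 (exp_lt_exp.2 (by linarith))
      filter_upwards [hY.eventually_ge_atTop (-τ / (exp θ - exp (θ - η)))] with i hi
      apply (hu.mono _).monotone
      rw [div_le_iff₀ hpos] at hi
      linarith
    have t1 : Tendsto (fun η : ℝ => a s (θ + η)) (nhdsWithin 0 (Set.Ioi 0)) (nhds (a s θ)) := by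
      have : Tendsto (fun η : ℝ => θ + η) (nhdsWithin 0 (Set.Ioi 0)) (nhds (θ + 0)) :=
        (Continuous.tendsto (by fun_prop) 0).mono_left nhdsWithin_le_nhds
      rw [add_zero] at this
      exact (hcont s).tendsto.comp this
    have t2 : Tendsto (fun η : ℝ => a s (θ - η)) (nhdsWithin 0 (Set.Ioi 0)) (nhds (a s θ)) := by
      have : Tendsto (fun η : ℝ => θ - η) (nhdsWithin 0 (Set.Ioi 0)) (nhds (θ - 0)) :=
        (Continuous.tendsto (by fun_prop) 0).mono_left nhdsWithin_le_nhds
      rw [sub_zero] at this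
      exact (hcont s).tendsto.comp this
    have e : l = a s θ := le_antisymm
      (ge_of_tendsto t1 (by filter_upwards [self_mem_nhdsWithin] with η hη using hup η hη))
      (le_of_tendsto t2 (by filter_upwards [self_mem_nhdsWithin] with η hη using hdown η hη))
    exact e ▸ hl
  -- hence vertical derivatives vanish in the limit
  have hzero : ∀ {g : ι → ℝ} {d : ℝ → ι → ℝ}, (∀ h, Tendsto (d h) 𝒰 (nhds 0)) →
      (∀ h i, |d h i - h * g i| ≤ K * h ^ 2) → Tendsto g 𝒰 (nhds 0) := by
    intro g d hd hg
    rw [Metric.tendsto_nhds]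
    intro ε hε
    set h := ε / (2 * K) with hh
    have hK := hu.pos
    have hh0 : 0 < h := by positivity
    have hKh : K * h = ε / 2 := by rw [hh]; field_simp
    have := (Metric.tendsto_nhds.1 (hd h)) (h * (ε / 2)) (by positivity)
    filter_upwards [this] with i hi
    rw [Real.dist_eq, sub_zero] at hi ⊢
    have h1 : |h * g i| ≤ |d h i| + |d h i - h * g i| := by
      have := abs_sub (d h i) (d h i - h * g i)
      simpa using this
    rw [abs_mul, abs_of_pos hh0] at h1
    have h2 := hg h i
    have h3 : K * h ^ 2 = h * (ε / 2) := by rw [← hKh]; ring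
    have : h * |g i| < h * ε := by linarith
    exact lt_of_mul_lt_mul_left this hh0.le
  have huy : ∀ s τ, Tendsto (fun i => uy (X i + s) (exp θ * Y i + τ)) 𝒰 (nhds 0) := by
    intro s τ
    refine hzero (d := fun h i => u (X i + s) (exp θ * Y i + τ + h) -
      u (X i + s) (exp θ * Y i + τ)) (fun h => ?_) (fun h i => ?_)
    · have := (hshift s (τ + h)).sub (hshift s τ)
      simpa [add_assoc] using this
    · exact abs_taylor_le (fun t => hu.jet.hy (X i + s) t) (fun x h => hu.lip_uy _ x h) _ h
  have huyy : ∀ s, Tendsto (fun i => uyy (X i + s) (exp θ * Y i)) 𝒰 (nhds 0) := by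
    intro s
    refine hzero (d := fun h i => uy (X i + s) (exp θ * Y i + h) -
      uy (X i + s) (exp θ * Y i)) (fun h => ?_) (fun h i => ?_)
    · have := (huy s h).sub (huy s 0)
      simpa using this
    · exact abs_taylor_le (fun t => hu.jet.hyy (X i + s) t) (fun x h => hu.lip_uyy _ x h) _ h
  have huxx : ∀ s, Tendsto (fun i => uxx (X i + s) (exp θ * Y i)) 𝒰 (nhds (f (a s θ))) := by
    intro s
    have h1 := ((hf.tendsto _).comp (ha s θ)).sub ((huyy s).add ((huy s 0).const_mul c))
    simp only [add_zero, mul_zero, sub_zero] at h1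
    refine h1.congr fun i => ?_
    simp only [Function.comp]
    rw [← hu.pde]; ring
  have hex : ∀ s, ∃ l, Tendsto (fun i => ux (X i + s) (exp θ * Y i)) 𝒰 (nhds l) := fun s =>
    𝒰.exists_tendsto_of_abs_le (Eventually.of_forall fun i => hu.abs_ux _ _)
  choose P hP using hex
  refine ⟨P, fun s => ?_, fun s => ?_⟩
  · refine hasDerivAt_of_abs_le_sq (C := K) fun h => ?_
    refine le_of_tendsto (((ha (s + h) θ).sub (ha s θ)).sub ((hP s).const_mul h)).abs
      (Eventually.of_forall fun i => ?_)
    have := abs_taylor_le (fun t => hu.jet.hx t (exp θ * Y i))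
      (fun x h => hu.lip_ux x (exp θ * Y i) h) (X i + s) h
    simpa [add_assoc] using this
  · refine hasDerivAt_of_abs_le_sq (C := K) fun h => ?_
    refine le_of_tendsto (((hP (s + h)).sub (hP s)).sub ((huxx s).const_mul h)).abs
      (Eventually.of_forall fun i => ?_)
    have := abs_taylor_le (fun t => hu.jet.hxx t (exp θ * Y i))
      (fun x h => hu.lip_uxx x (exp θ * Y i) h) (X i + s) h
    simpa [add_assoc] using this

end RegularWave

theorem exists_gt_of_deriv_le_neg {h h' : ℝ → ℝ} (hd : ∀ s, HasDerivAt h (h' s) s) {s₀ ε : ℝ}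
    (hε : 0 < ε) (hle : ∀ s ≤ s₀, h' s ≤ -ε) (C : ℝ) : ∃ s ≤ s₀, C < h s := by
  have hanti : AntitoneOn (fun s => h s + ε * s) (Set.Iic s₀) := by
    refine antitoneOn_of_hasDerivWithinAt_nonpos (f' := fun s => h' s + ε * 1) (convex_Iic s₀)
      (fun s _ => ?_) (fun s _ => ?_) (fun s hs => ?_)
    · exact ((hd s).add ((hasDerivAt_id s).const_mul ε)).continuousAt.continuousWithinAt
    · exact ((hd s).add ((hasDerivAt_id s).const_mul ε)).hasDerivWithinAt
    · rw [interior_Iic] at hs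
      have := hle s (le_of_lt hs)
      linarith
  set r := (|C - h s₀| + 1) / ε with hr
  have hr0 : 0 < r := by positivity
  refine ⟨s₀ - r, by linarith, ?_⟩
  have := hanti (show s₀ - r ∈ Set.Iic s₀ from by simp [hr0.le]) (Set.mem_Iic.2 le_rfl)
    (by linarith)
  have e : ε * r = |C - h s₀| + 1 := by rw [hr]; field_simp
  have := le_abs_self (C - h s₀)
  simp only at *
  nlinarith

theorem exists_lt_of_le_deriv_neg {h h' : ℝ → ℝ} (hd : ∀ s, HasDerivAt h (h' s) s) {s₀ ε : ℝ}
    (hε : 0 < ε) (hle : ∀ s, s₀ ≤ s → h' s ≤ -ε) (C : ℝ) : ∃ s, s₀ ≤ s ∧ h s < C := by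
  have hd' : ∀ s, HasDerivAt (fun t => -h (-t)) (h' (-s)) s := fun s => by
    have := ((hd (-s)).comp s (hasDerivAt_neg s)).neg
    exact this.congr_deriv (by ring)
  obtain ⟨s, hs, hC⟩ := exists_gt_of_deriv_le_neg hd' (s₀ := -s₀) hε
    (fun s hs => hle _ (by linarith)) (-C)
  exact ⟨-s, by linarith, by linarith⟩

theorem exists_lt_of_le_deriv {h h' : ℝ → ℝ} (hd : ∀ s, HasDerivAt h (h' s) s) {s₀ ε : ℝ}
    (hε : 0 < ε) (hle : ∀ s ≤ s₀, ε ≤ h' s) (C : ℝ) : ∃ s ≤ s₀, h s < C := by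
  obtain ⟨s, hs, hC⟩ := exists_gt_of_deriv_le_neg (fun s => (hd s).neg) (s₀ := s₀) hε
    (fun s hs => by have := hle s hs; linarith) (-C)
  exact ⟨s, hs, by simpa using hC⟩

/-- A balanced double-well potential `F` with derivatives `f`, `f'`, and a bound for `f'` between
the wells. -/
structure WellPotential (F f f' : ℝ → ℝ) (B : ℝ) : Prop where
  hF : ∀ t, HasDerivAt F (f t) t
  hf : ∀ t, HasDerivAt f (f' t) t
  bound : ∀ t, |t| ≤ 1 → |f' t| ≤ B
  f_neg_one : f (-1) = 0
  f_one : f 1 = 0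
  f_pos : ∀ s, -1 < s → s < 0 → 0 < f s
  f_neg : ∀ s, 0 < s → s < 1 → f s < 0
  F_neg_one : F (-1) = 0
  F_one : F 1 = 0

namespace WellPotential

variable {F f f' : ℝ → ℝ} {B : ℝ}

theorem continuous_F (hW : WellPotential F f f' B) : Continuous F :=
  continuous_iff_continuousAt.2 fun t => (hW.hF t).continuousAt

theorem continuous_f (hW : WellPotential F f f' B) : Continuous f :=
  continuous_iff_continuousAt.2 fun t => (hW.hf t).continuousAt

theorem f_nonpos (hW : WellPotential F f f' B) {s : ℝ} (h0 : 0 ≤ s) (h1 : s ≤ 1) : f s ≤ 0 := by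
  have hcl : closure (Set.Ioo (0 : ℝ) 1) ⊆ {s | f s ≤ 0} :=
    closure_minimal (fun s hs => (hW.f_neg s hs.1 hs.2).le)
      (isClosed_le hW.continuous_f continuous_const)
  rw [closure_Ioo zero_ne_one] at hcl
  exact hcl ⟨h0, h1⟩

theorem F_pos (hW : WellPotential F f f' B) {s : ℝ} (h0 : -1 < s) (h1 : s < 1) : 0 < F s := by
  rcases le_total s 0 with hs | hs
  · have : StrictMonoOn F (Set.Icc (-1) 0) := by
      refine strictMonoOn_of_deriv_pos (convex_Icc _ _) hW.continuous_F.continuousOn fun t ht => ?_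
      rw [interior_Icc] at ht
      rw [(hW.hF t).deriv]
      exact hW.f_pos t ht.1 ht.2
    have := this (show (-1 : ℝ) ∈ Set.Icc (-1) 0 by norm_num) (show s ∈ Set.Icc (-1) 0 from
      ⟨h0.le, hs⟩) h0
    rwa [hW.F_neg_one] at this
  · have : StrictAntiOn F (Set.Icc 0 1) := by
      refine strictAntiOn_of_deriv_neg (convex_Icc _ _) hW.continuous_F.continuousOn fun t ht => ?_
      rw [interior_Icc] at ht
      rw [(hW.hF t).deriv]
      exact hW.f_neg t ht.1 ht.2
    have := this (show s ∈ Set.Icc 0 1 from ⟨hs, h1.le⟩) (show (1 : ℝ) ∈ Set.Icc 0 1 by norm_num) h1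
    rwa [hW.F_one] at this

theorem lipschitz (hW : WellPotential F f f' B) :
    LipschitzOnWith (B.toNNReal) f {t | |t| ≤ 1} := by
  have hconv : Convex ℝ {t : ℝ | |t| ≤ 1} := by
    have : {t : ℝ | |t| ≤ 1} = Set.Icc (-1) 1 := by ext t; simp [abs_le]
    rw [this]; exact convex_Icc _ _
  refine hconv.lipschitzOnWith_of_nnnorm_hasDerivWithin_le
    (fun t _ => (hW.hf t).hasDerivWithinAt) fun t ht => ?_
  rw [← NNReal.coe_le_coe, coe_nnnorm, Real.norm_eq_abs]
  exact (hW.bound t ht).trans (Real.le_coe_toNNReal B)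

/-- Solutions of `V'' = f V` with values between the wells are determined by their Cauchy data. -/
theorem ode_unique (hW : WellPotential F f f' B) {g P h Q : ℝ → ℝ}
    (hg : ∀ s, HasDerivAt g (P s) s) (hP : ∀ s, HasDerivAt P (f (g s)) s) (hg1 : ∀ s, |g s| ≤ 1)
    (hh : ∀ s, HasDerivAt h (Q s) s) (hQ : ∀ s, HasDerivAt Q (f (h s)) s) (hh1 : ∀ s, |h s| ≤ 1)
    {s₀ : ℝ} (h0 : g s₀ = h s₀) (h0' : P s₀ = Q s₀) (s : ℝ) : g s = h s := by
  have key : Set.EqOn (fun s => (g s, P s)) (fun s => (h s, Q s))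
      (Set.Ioo (s₀ - |s - s₀| - 1) (s₀ + |s - s₀| + 1)) := by
    refine ODE_solution_unique_of_mem_Ioo (K := max 1 B.toNNReal) (t₀ := s₀)
      (v := fun _ (p : ℝ × ℝ) => (p.2, f p.1)) (s := fun _ => {p : ℝ × ℝ | |p.1| ≤ 1}) ?_ ?_ ?_ ?_ ?_
    · intro t _
      refine LipschitzOnWith.of_dist_le_mul fun p hp q hq => ?_
      have h1 := hW.lipschitz.dist_le_mul p.1 hp q.1 hq
      have h2 : dist p.1 q.1 ≤ dist p q := by rw [Prod.dist_eq]; exact le_max_left _ _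
      have h3 : dist p.2 q.2 ≤ dist p q := by rw [Prod.dist_eq]; exact le_max_right _ _
      rw [Prod.dist_eq]
      have h4 : (1 : ℝ) ≤ ((max 1 B.toNNReal : NNReal) : ℝ) := by
        exact_mod_cast le_max_left _ _
      have h5 : ((B.toNNReal : NNReal) : ℝ) ≤ ((max 1 B.toNNReal : NNReal) : ℝ) := by
        exact_mod_cast le_max_right _ _
      have h6 : 0 ≤ dist p q := dist_nonneg
      refine max_le ?_ ?_
      · exact h3.trans (by nlinarith)
      · refine h1.trans ?_
        have := mul_le_mul h5 h2 dist_nonneg (by linarith)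
        exact this
    · have := abs_nonneg (s - s₀)
      constructor <;> linarith
    · exact fun t _ => ⟨(hg t).prodMk (hP t), hg1 t⟩
    · exact fun t _ => ⟨(hh t).prodMk (hQ t), hh1 t⟩
    · simp [h0, h0']
  have hs : s ∈ Set.Ioo (s₀ - |s - s₀| - 1) (s₀ + |s - s₀| + 1) := by
    have h1 := le_abs_self (s - s₀)
    have h2 := neg_abs_le (s - s₀)
    constructor <;> linarith
  exact congrArg Prod.fst (key hs)

/-- A solution of `V'' = f V` with values in `[0, 1]` is constant. -/
theorem eq_const_of_nonneg (hW : WellPotential F f f' B) {V P : ℝ → ℝ}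
    (hV : ∀ s, HasDerivAt V (P s) s) (hP : ∀ s, HasDerivAt P (f (V s)) s)
    (h0 : ∀ s, 0 ≤ V s) (h1 : ∀ s, V s ≤ 1) : (∀ s t, V s = V t) ∧ ∀ s, f (V s) = 0 := by
  have hanti : Antitone P := antitone_of_hasDerivAt_nonpos hP fun s => hW.f_nonpos (h0 s) (h1 s)
  have hP0 : ∀ s, P s = 0 := by
    intro s₀
    rcases lt_trichotomy (P s₀) 0 with h | h | h
    · obtain ⟨s, -, hs⟩ := exists_lt_of_le_deriv_neg hV (s₀ := s₀) (ε := -P s₀) (by linarith)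
        (fun s hs => by simpa using hanti hs) 0
      linarith [h0 s]
    · exact h
    · obtain ⟨s, -, hs⟩ := exists_lt_of_le_deriv hV (s₀ := s₀) h (fun s hs => hanti hs) 0
      linarith [h0 s]
  refine ⟨fun s t => is_const_of_deriv_eq_zero (fun s => (hV s).differentiableAt)
    (fun s => by rw [(hV s).deriv, hP0]) s t, fun s => ?_⟩
  have hc : P = fun _ => 0 := funext hP0
  have := hP s
  rw [hc] at this
  exact this.unique (hasDerivAt_const s 0)

end WellPotential

/-- A decreasing transition layer for `V'' = f V`, centred at the origin. -/
structure IsLayer (f g P : ℝ → ℝ) : Prop where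
  hg : ∀ s, HasDerivAt g (P s) s
  hP : ∀ s, HasDerivAt P (f (g s)) s
  bdd : ∀ s, |g s| ≤ 1
  zero : g 0 = 0
  nonneg : ∀ s ≤ 0, 0 ≤ g s
  nonpos : ∀ s, 0 ≤ s → g s ≤ 0
  large : ∃ s, 1 / 2 ≤ g s

namespace IsLayer

variable {F f f' : ℝ → ℝ} {B : ℝ} {g P : ℝ → ℝ}

theorem antitoneOn_deriv (hg : IsLayer f g P) (hW : WellPotential F f f' B) :
    AntitoneOn P (Set.Iic 0) := by
  refine antitoneOn_of_hasDerivWithinAt_nonpos (convex_Iic 0)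
    (fun s _ => (hg.hP s).continuousAt.continuousWithinAt)
    (fun s _ => (hg.hP s).hasDerivWithinAt) (fun s hs => ?_)
  rw [interior_Iic] at hs
  exact hW.f_nonpos (hg.nonneg s (le_of_lt hs)) (abs_le.1 (hg.bdd s)).2

theorem deriv_nonpos (hg : IsLayer f g P) (hW : WellPotential F f f' B) {s : ℝ} (hs : s ≤ 0) :
    P s ≤ 0 := by
  by_contra! h
  obtain ⟨t, ht, hlt⟩ := exists_lt_of_le_deriv hg.hg h
    (fun t ht => hg.antitoneOn_deriv hW (ht.trans hs) hs ht) 0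
  linarith [hg.nonneg t (ht.trans hs)]

theorem antitoneOn (hg : IsLayer f g P) (hW : WellPotential F f f' B) :
    AntitoneOn g (Set.Iic 0) := by
  refine antitoneOn_of_hasDerivWithinAt_nonpos (convex_Iic 0)
    (fun s _ => (hg.hg s).continuousAt.continuousWithinAt)
    (fun s _ => (hg.hg s).hasDerivWithinAt) (fun s hs => ?_)
  rw [interior_Iic] at hs
  exact hg.deriv_nonpos hW (le_of_lt hs)

theorem exists_gt (hg : IsLayer f g P) (hW : WellPotential F f f' B) {ε : ℝ} (hε : 0 < ε) :
    ∃ s ≤ 0, 1 - ε < g s := by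
  by_contra! h
  obtain ⟨s₁, hs₁⟩ := hg.large
  have hs₁0 : s₁ ≤ 0 := by
    by_contra! h
    linarith [hg.nonpos s₁ h.le]
  have hmem : ∀ s ≤ s₁, g s ∈ Set.Icc (1 / 2) (1 - ε) := fun s hs =>
    ⟨hs₁.trans (hg.antitoneOn hW (hs.trans hs₁0) hs₁0 hs), h s (hs.trans hs₁0)⟩
  obtain ⟨t, ht, hmax⟩ := (isCompact_Icc (a := (1 / 2 : ℝ)) (b := 1 - ε)).exists_isMaxOn
    ⟨_, hmem s₁ le_rfl⟩ hW.continuous_f.continuousOn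
  have hft : f t < 0 := hW.f_neg t (by linarith [ht.1]) (by linarith [ht.2])
  obtain ⟨s, hs, hC⟩ := exists_gt_of_deriv_le_neg hg.hP (s₀ := s₁) (ε := -f t) (by linarith)
    (fun s hs => by simpa using hmax (hmem s hs)) 0
  linarith [hg.deriv_nonpos hW (hs.trans hs₁0)]

theorem tendsto_atBot (hg : IsLayer f g P) (hW : WellPotential F f f' B) :
    Tendsto g atBot (nhds 1) := by
  rw [Metric.tendsto_nhds]
  intro ε hε
  obtain ⟨s₀, hs₀, h⟩ := hg.exists_gt hW hε
  filter_upwards [eventually_le_atBot s₀] with s hs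
  have h1 := hg.antitoneOn hW (hs.trans hs₀) hs₀ hs
  have h2 := (abs_le.1 (hg.bdd s)).2
  rw [Real.dist_eq, abs_lt]
  constructor <;> linarith

theorem tendsto_deriv_atBot (hg : IsLayer f g P) (hW : WellPotential F f f' B) :
    Tendsto P atBot (nhds 0) := by
  rw [Metric.tendsto_nhds]
  intro ε hε
  have : ∃ s ≤ 0, -ε < P s := by
    by_contra! h
    obtain ⟨s, -, hs⟩ := exists_gt_of_deriv_le_neg hg.hg hε h 1
    linarith [(abs_le.1 (hg.bdd s)).2]
  obtain ⟨s₀, hs₀, h⟩ := this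
  filter_upwards [eventually_le_atBot s₀] with s hs
  have h1 := hg.antitoneOn_deriv hW (hs.trans hs₀) hs₀ hs
  have h2 := hg.deriv_nonpos hW (hs.trans hs₀)
  rw [Real.dist_eq, abs_lt]
  constructor <;> linarith

theorem energy (hg : IsLayer f g P) (hW : WellPotential F f f' B) (s : ℝ) :
    P s ^ 2 = 2 * F (g s) := by
  have hd : ∀ s, HasDerivAt (fun s => P s ^ 2 - 2 * F (g s)) 0 s := fun s =>
    (((hg.hP s).pow 2).sub (((hW.hF (g s)).comp s (hg.hg s)).const_mul 2)).congr_deriv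
      (by simp; ring)
  have hconst : ∀ t, P t ^ 2 - 2 * F (g t) = P s ^ 2 - 2 * F (g s) := fun t =>
    is_const_of_deriv_eq_zero (fun s => (hd s).differentiableAt) (fun s => (hd s).deriv) t s
  have hlim : Tendsto (fun s => P s ^ 2 - 2 * F (g s)) atBot (nhds (0 ^ 2 - 2 * F 1)) :=
    ((hg.tendsto_deriv_atBot hW).pow 2).sub
      (((hW.continuous_F.tendsto 1).comp (hg.tendsto_atBot hW)).const_mul 2)
  have hlim' : Tendsto (fun s => P s ^ 2 - 2 * F (g s)) atBot (nhds (P s ^ 2 - 2 * F (g s))) :=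
    tendsto_const_nhds.congr fun t => (hconst t).symm
  have := tendsto_nhds_unique hlim hlim'
  rw [hW.F_one] at this
  linarith

theorem unique (hW : WellPotential F f f' B) {h Q : ℝ → ℝ} (hg : IsLayer f g P)
    (hh : IsLayer f h Q) (s : ℝ) : g s = h s := by
  refine hW.ode_unique hg.hg hg.hP hg.bdd hh.hg hh.hP hh.bdd (s₀ := 0)
    (by rw [hg.zero, hh.zero]) ?_ s
  have h1 := hg.energy hW 0
  have h2 := hh.energy hW 0
  rw [hg.zero] at h1
  rw [hh.zero] at h2
  have := hg.deriv_nonpos hW le_rfl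
  have := hh.deriv_nonpos hW le_rfl
  nlinarith [sq_eq_sq₀ (a := -P 0) (b := -Q 0) (by linarith) (by linarith)]

theorem deriv_neg (hg : IsLayer f g P) (hW : WellPotential F f f' B) (s : ℝ) : P s < 0 := by
  have hne : ∀ s, P s ≠ 0 := by
    intro s hs
    have he := hg.energy hW s
    rw [hs] at he
    have hb := abs_le.1 (hg.bdd s)
    have hpm : g s = -1 ∨ g s = 1 := by
      by_contra! h
      have := hW.F_pos (lt_of_le_of_ne hb.1 h.1.symm) (lt_of_le_of_ne hb.2 h.2)
      linarith
    have hconst : ∀ e : ℝ, f e = 0 → |e| ≤ 1 → g s = e → e = 0 := by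
      intro e he he1 hge
      have := hW.ode_unique hg.hg hg.hP hg.bdd (h := fun _ => e) (Q := fun _ => 0)
        (fun s => hasDerivAt_const s e) (fun s => by simpa [he] using hasDerivAt_const s (0 : ℝ))
        (fun _ => he1) hge hs 0
      rw [hg.zero] at this
      exact this.symm
    rcases hpm with h | h
    · have := hconst (-1) hW.f_neg_one (by norm_num) h
      norm_num at this
    · have := hconst 1 hW.f_one (by norm_num) h
      norm_num at this
  by_contra! h
  have hcont : Continuous P := continuous_iff_continuousAt.2 fun t => (hg.hP t).continuousAt
  obtain ⟨t, ht⟩ := mem_range_of_exists_le_of_exists_ge hcont (c := 0)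
    ⟨0, hg.deriv_nonpos hW le_rfl⟩ ⟨s, h⟩
  exact hne t ht

theorem strictAnti (hg : IsLayer f g P) (hW : WellPotential F f f' B) : StrictAnti g :=
  strictAnti_of_deriv_neg fun s => by rw [(hg.hg s).deriv]; exact hg.deriv_neg hW s

theorem continuous (hg : IsLayer f g P) : Continuous g :=
  continuous_iff_continuousAt.2 fun t => (hg.hg t).continuousAt

theorem exists_lt (hg : IsLayer f g P) (hW : WellPotential F f f' B) {ε : ℝ} (hε : 0 < ε) :
    ∃ s ≥ 0, g s < -1 + ε := by
  by_contra! h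
  have hmem : ∀ s, 0 ≤ s → g s ∈ Set.Icc (-1 + ε) 0 := fun s hs => ⟨h s hs, hg.nonpos s hs⟩
  obtain ⟨t, ht, hmin⟩ := (isCompact_Icc (a := -1 + ε) (b := 0)).exists_isMinOn
    ⟨_, hmem 0 le_rfl⟩ hW.continuous_F.continuousOn
  have hFt : 0 < F t := hW.F_pos (by linarith [ht.1]) (by linarith [ht.2])
  obtain ⟨s, hs, hC⟩ := exists_lt_of_le_deriv_neg hg.hg (s₀ := 0) (sqrt_pos.2 hFt)
    (fun s hs => by
      have h1 : F t ≤ F (g s) := hmin (hmem s hs)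
      have h2 := hg.energy hW s
      have h3 := hg.deriv_neg hW s
      have h4 : sqrt (F t) ≤ -P s := by
        rw [Real.sqrt_le_left (by linarith)]
        nlinarith
      linarith) (-1)
  linarith [(abs_le.1 (hg.bdd s)).1]

end IsLayer

/-- For `y ≥ Y`, the graph of `k` is the zero set of `u` in the right half plane, with
`k y = κ log y + C + o(1)`. -/
structure RightBranch (u : ℝ → ℝ → ℝ) (k : ℝ → ℝ) (κ C Y : ℝ) : Prop where
  hκ : 0 < κ
  hY : 0 < Y
  nonneg : ∀ y, Y ≤ y → 0 ≤ k y
  pos : ∀ y, Y ≤ y → ∀ x, 0 ≤ x → x < k y → 0 < u x y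
  zero : ∀ y, Y ≤ y → u (k y) y = 0
  neg : ∀ y, Y ≤ y → ∀ x, k y < x → u x y < 0
  cont : ContinuousOn k (Set.Ici Y)
  lim : Tendsto (fun y => k y - κ * log y) atTop (nhds C)
  top : ∀ x, Tendsto (u x) atTop (nhds 1)

namespace RightBranch

variable {F f f' : ℝ → ℝ} {B c K : ℝ} {u ux uxx uy uyy : ℝ → ℝ → ℝ} {k : ℝ → ℝ} {κ C Y₁ : ℝ}

theorem tendsto_atTop (hk : RightBranch u k κ C Y₁) : Tendsto k atTop atTop := by
  have := hk.lim.add_atTop (tendsto_log_atTop.const_mul_atTop hk.hκ)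
  simpa using this

theorem tendsto_shift (hk : RightBranch u k κ C Y₁) (θ : ℝ) :
    Tendsto (fun y => k (exp θ * y) - k y) atTop (nhds (κ * θ)) := by
  have h1 : Tendsto (fun y => exp θ * y) atTop atTop :=
    tendsto_id.const_mul_atTop (exp_pos θ)
  have h2 := ((hk.lim.comp h1).sub hk.lim).add_const (κ * θ)
  rw [sub_self, zero_add] at h2
  refine h2.congr' ?_
  filter_upwards [eventually_gt_atTop 0] with y hy
  simp only [Function.comp]
  rw [log_mul (exp_pos θ).ne' hy.ne', log_exp]
  ring

theorem strictMonoOn (hk : RightBranch u k κ C Y₁) (hu : RegularWave f c K u ux uxx uy uyy) :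
    StrictMonoOn k (Set.Ici Y₁) := by
  intro y hy y' hy' hlt
  have h1 := hu.mono (k y') hlt
  rw [hk.zero y' hy'] at h1
  by_contra! h
  rcases h.lt_or_eq with h | h
  · linarith [hk.pos y hy _ (hk.nonneg y' hy') h]
  · rw [h, hk.zero y hy] at h1
    exact lt_irrefl _ h1

theorem exists_eq (hk : RightBranch u k κ C Y₁) {y x : ℝ} (hy : Y₁ ≤ y) (hx : k y ≤ x) :
    ∃ y', y ≤ y' ∧ k y' = x := by
  obtain ⟨z, hz, hzy⟩ := ((hk.tendsto_atTop.eventually_ge_atTop x).and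
    (eventually_ge_atTop y)).exists
  obtain ⟨y', hy', h⟩ := intermediate_value_Icc hzy
    (hk.cont.mono fun t ht => hy.trans ht.1) ⟨hx, hz⟩
  exact ⟨y', hy'.1, h⟩

end RightBranch

namespace RegularWave

variable {F f f' : ℝ → ℝ} {B c K : ℝ} {u ux uxx uy uyy : ℝ → ℝ → ℝ} {k : ℝ → ℝ} {κ C Y₁ : ℝ}

theorem continuous_x (hu : RegularWave f c K u ux uxx uy uyy) (y : ℝ) :
    Continuous fun x => u x y :=
  continuous_iff_continuousAt.2 fun x => (hu.jet.hx x y).continuousAt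

/-- Convergence as `y → ∞` is uniform on compact sets of abscissae. -/
theorem exists_forall_gt (hu : RegularWave f c K u ux uxx uy uyy)
    (htop : ∀ x, Tendsto (u x) atTop (nhds 1)) {s : Set ℝ} (hs : IsCompact s) {v : ℝ}
    (hv : v < 1) : ∃ Y, ∀ x ∈ s, ∀ y, Y ≤ y → v < u x y := by
  refine hs.induction_on (p := fun s => ∃ Y, ∀ x ∈ s, ∀ y, Y ≤ y → v < u x y) ⟨0, by simp⟩
    (fun s t hst ⟨Y, hY⟩ => ⟨Y, fun x hx => hY x (hst hx)⟩) ?_ ?_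
  · rintro s t ⟨Y, hY⟩ ⟨Y', hY'⟩
    refine ⟨max Y Y', fun x hx y hy => ?_⟩
    rcases hx with hx | hx
    · exact hY x hx y ((le_max_left _ _).trans hy)
    · exact hY' x hx y ((le_max_right _ _).trans hy)
  · intro x _
    obtain ⟨Y, hY⟩ := ((htop x).eventually (lt_mem_nhds hv)).exists
    exact ⟨_, nhdsWithin_le_nhds ((hu.continuous_x Y).continuousAt.eventually (lt_mem_nhds hY)),
      Y, fun x' hx' y hy => lt_of_lt_of_le hx' ((hu.mono x').monotone hy)⟩

/-- Far to the left of the branch, low values propagate towards the axis. -/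
theorem exists_flat (hu : RegularWave f c K u ux uxx uy uyy) (hW : WellPotential F f f' B)
    (hk : RightBranch u k κ C Y₁) {q : ℝ} (hq : 0 < q) :
    ∃ R, ∀ x y, R ≤ x → R ≤ y → x ≤ k y - R → 1 / 2 < u (x - 1) (exp (-q) * y) →
      1 / 2 < u x y := by
  by_contra! h
  choose x y hx hy hxy hlt hle using fun n : ℕ => h n
  have hy' : Tendsto y atTop atTop := tendsto_atTop_mono hy tendsto_natCast_atTop_atTop
  have h𝒰 : (hyperfilter ℕ : Filter ℕ) ≤ atTop := Nat.hyperfilter_le_atTop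
  obtain ⟨a, ha, hdense⟩ := hu.exists_dense_ode_limit hW.continuous_f (hyperfilter ℕ) x y
    (hy'.mono_left h𝒰)
  obtain ⟨θ, ⟨P, hV, hP⟩, hθ⟩ := hdense.exists_mem_open isOpen_Ioo
    (Set.nonempty_Ioo.2 (show -q < 0 by linarith))
  have hyθ : Tendsto (fun n => exp θ * y n) atTop atTop := hy'.const_mul_atTop (exp_pos θ)
  have hy0 : ∀ n, 0 ≤ y n := fun n => (Nat.cast_nonneg n).trans (hy n)
  have h0 : ∀ s, 0 ≤ a s θ := by
    intro s
    refine ge_of_tendsto (ha s θ) (h𝒰 ?_)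
    have hn : Tendsto (fun n : ℕ => (n : ℝ)) atTop atTop := tendsto_natCast_atTop_atTop
    filter_upwards [hn.eventually_ge_atTop (-s), hn.eventually_gt_atTop (s + 1 - κ * θ),
      hyθ.eventually_ge_atTop Y₁, ((hk.tendsto_shift θ).comp hy').eventually
        (lt_mem_nhds (show κ * θ - 1 < κ * θ by linarith))] with n h1 h2 h3 h4
    simp only [Function.comp] at h4
    exact (hk.pos _ h3 _ (by linarith [hx n]) (by linarith [hxy n])).le
  have h1 : ∀ s, a s θ ≤ 1 := fun s =>
    le_of_tendsto (ha s θ) (Eventually.of_forall fun n => (abs_le.1 (hu.bdd _ _)).2)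
  obtain ⟨hconst, hf0⟩ := hW.eq_const_of_nonneg hV hP h0 h1
  have hle' : a 0 θ ≤ 1 / 2 := by
    refine le_of_tendsto (ha 0 θ) (Eventually.of_forall fun n => le_trans ?_ (hle n))
    rw [add_zero]
    refine (hu.mono _).monotone ?_
    have := exp_le_one_iff.2 hθ.2.le
    nlinarith [hy0 n]
  have hge' : 1 / 2 ≤ a (-1) θ := by
    refine ge_of_tendsto (ha (-1) θ) (Eventually.of_forall fun n => le_trans (hlt n).le ?_)
    rw [← sub_eq_add_neg]
    exact (hu.mono _).monotone (mul_le_mul_of_nonneg_right (exp_le_exp.2 hθ.1.le) (hy0 n))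
  have e : a 0 θ = 1 / 2 := le_antisymm hle' (by rw [hconst 0 (-1)]; exact hge')
  have := hf0 0
  rw [e] at this
  linarith [hW.f_neg (1 / 2) (by norm_num) (by norm_num)]

theorem exists_gt_half (hu : RegularWave f c K u ux uxx uy uyy) (hW : WellPotential F f f' B)
    (hk : RightBranch u k κ C Y₁) :
    ∃ R X Y, ∀ x y, Y ≤ y → X ≤ x → x ≤ k y - R → 1 / 2 < u x y := by
  set q := 1 / (2 * κ) with hq
  have hκ := hk.hκ
  have hq0 : 0 < q := by positivity
  have hκq : κ * -q = -(1 / 2) := by rw [hq]; field_simp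
  obtain ⟨R, hR⟩ := hu.exists_flat hW hk hq0
  obtain ⟨Y₂, hY₂⟩ := eventually_atTop.1 ((hk.tendsto_shift (-q)).eventually
    (lt_mem_nhds (show -1 < κ * -q by rw [hκq]; norm_num)))
  obtain ⟨Y₃, hY₃⟩ := hu.exists_forall_gt hk.top (isCompact_Icc (a := R) (b := R + 1))
    (show (1 / 2 : ℝ) < 1 by norm_num)
  set Y := max (max Y₁ R) (max Y₂ Y₃) with hYdef
  have hYY₁ : Y₁ ≤ Y := (le_max_left _ _).trans (le_max_left _ _)
  have hYR : R ≤ Y := (le_max_right _ _).trans (le_max_left _ _)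
  have hYY₂ : Y₂ ≤ Y := (le_max_left _ _).trans (le_max_right _ _)
  have hYY₃ : Y₃ ≤ Y := (le_max_right _ _).trans (le_max_right _ _)
  have hqY : Y ≤ exp q * Y := by
    have := one_le_exp hq0.le
    nlinarith [hk.hY]
  set R' := max R (k (exp q * Y) - R + 1)
  have hRR' : R ≤ R' := le_max_left _ _
  have hR' : k (exp q * Y) - R + 1 ≤ R' := le_max_right _ _
  have hlow : ∀ x y, Y ≤ y → R ≤ x → x ≤ k y - R' → Y ≤ exp (-q) * y := by
    intro x y hy hx hxy
    have : exp q * Y ≤ y := by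
      by_contra! h
      have := (hk.strictMonoOn hu).monotoneOn (hYY₁.trans hy) (hYY₁.trans hqY) h.le
      linarith
    calc Y = exp (-q) * (exp q * Y) := by rw [← mul_assoc, ← exp_add]; simp
      _ ≤ _ := mul_le_mul_of_nonneg_left this (exp_pos _).le
  have hind : ∀ n : ℕ, ∀ x y, Y ≤ y → R ≤ x → x ≤ R + n + 1 → x ≤ k y - R' → 1 / 2 < u x y := by
    intro n
    induction n with
    | zero =>
      intro x y hy hx hxn _
      exact hY₃ x ⟨hx, by simpa using hxn⟩ y (hYY₃.trans hy)
    | succ n ih =>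
      intro x y hy hx hxn hxy
      rcases le_total x (R + 1) with h | h
      · exact hY₃ x ⟨hx, h⟩ y (hYY₃.trans hy)
      · refine hR x y hx (hYR.trans hy) (by linarith) ?_
        have h2 := hY₂ y (hYY₂.trans hy)
        push_cast at hxn
        exact ih (x - 1) _ (hlow x y hy hx hxy) (by linarith) (by linarith) (by linarith)
  refine ⟨R', R, Y, fun x y hy hx hxy => ?_⟩
  obtain ⟨n, hn⟩ := exists_nat_ge (x - R)
  exact hind n x y hy hx (by linarith) hxy

/-- Along the branch the wave converges to the one-dimensional layer. -/
theorem exists_layer (hu : RegularWave f c K u ux uxx uy uyy) (hW : WellPotential F f f' B)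
    (hk : RightBranch u k κ C Y₁) :
    ∃ g P, IsLayer f g P ∧ ∀ s, Tendsto (fun y => u (k y + s) y) atTop (nhds (g s)) := by
  obtain ⟨R, X, Y, hN⟩ := hu.exists_gt_half hW hk
  have hlim : ∀ 𝒰 : Ultrafilter ℝ, (𝒰 : Filter ℝ) ≤ atTop → ∃ a : ℝ → ℝ → ℝ,
      (∀ s θ, Tendsto (fun y => u (k y + s) (exp θ * y)) 𝒰 (nhds (a s θ))) ∧
      Dense {θ | ∃ P, IsLayer f (fun s => a (s + κ * θ) θ) P} := by
    intro 𝒰 h𝒰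
    obtain ⟨a, ha, hdense⟩ := hu.exists_dense_ode_limit hW.continuous_f 𝒰 k id h𝒰
    refine ⟨a, ha, hdense.mono ?_⟩
    rintro θ ⟨P, hV, hP⟩
    have hyθ : Tendsto (fun y => exp θ * y) atTop atTop :=
      tendsto_id.const_mul_atTop (exp_pos θ)
    have hkθ : Tendsto (fun y => k (exp θ * y) - (k y + κ * θ)) atTop (nhds 0) := by
      have := (hk.tendsto_shift θ).sub_const (κ * θ)
      rw [sub_self] at this
      exact this.congr fun y => by ring
    have hzero : a (κ * θ) θ = 0 := by
      have h0 : Tendsto (fun y => u (k (exp θ * y)) (exp θ * y)) 𝒰 (nhds 0) := by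
        refine tendsto_const_nhds.congr' (h𝒰 ?_)
        filter_upwards [hyθ.eventually_ge_atTop Y₁] with y hy
        exact (hk.zero _ hy).symm
      refine tendsto_nhds_unique (ha (κ * θ) θ) (hu.tendsto_of_tendsto_sub h0 ?_)
      have := (hkθ.mono_left h𝒰).neg
      rw [neg_zero] at this
      exact this.congr fun y => by ring
    refine ⟨fun s => P (s + κ * θ), ?_, ?_, ?_, ?_, ?_, ?_, ?_⟩
    · exact fun s => (hV (s + κ * θ)).comp_add_const s (κ * θ)
    · exact fun s => (hP (s + κ * θ)).comp_add_const s (κ * θ)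
    · exact fun s => le_of_tendsto (ha (s + κ * θ) θ).abs (Eventually.of_forall fun y => hu.bdd _ _)
    · simpa using hzero
    · intro s hs
      rcases hs.lt_or_eq with hs | rfl
      · refine ge_of_tendsto (ha (s + κ * θ) θ) (h𝒰 ?_)
        filter_upwards [hyθ.eventually_ge_atTop Y₁,
          hk.tendsto_atTop.eventually_ge_atTop (-(s + κ * θ)),
          hkθ.eventually (lt_mem_nhds hs)] with y h1 h2 h3
        exact (hk.pos _ h1 _ (by linarith) (by linarith)).le
      · simpa using hzero.ge
    · intro s hs
      rcases hs.lt_or_eq with hs | rfl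
      · refine le_of_tendsto (ha (s + κ * θ) θ) (h𝒰 ?_)
        filter_upwards [hyθ.eventually_ge_atTop Y₁,
          hkθ.eventually (gt_mem_nhds hs)] with y h1 h3
        exact (hk.neg _ h1 _ (by linarith)).le
      · simpa using hzero.le
    · refine ⟨-R - 1, ge_of_tendsto (ha _ θ) (h𝒰 ?_)⟩
      filter_upwards [hyθ.eventually_ge_atTop Y,
          hk.tendsto_atTop.eventually_ge_atTop (X - (-R - 1 + κ * θ)),
          hkθ.eventually (lt_mem_nhds (show (-1 : ℝ) < 0 by norm_num))] with y h1 h2 h3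
      exact (hN _ _ h1 (by linarith) (by linarith)).le
  obtain ⟨a₀, -, hd₀⟩ := hlim (Ultrafilter.of atTop) (Ultrafilter.of_le atTop)
  obtain ⟨θ₀, P, hg⟩ := hd₀.nonempty
  refine ⟨_, P, hg, fun s => ?_⟩
  set g : ℝ → ℝ := fun s => a₀ (s + κ * θ₀) θ₀ with hgdef
  rw [tendsto_iff_ultrafilter]
  intro 𝒰 h𝒰
  obtain ⟨a, ha, hd⟩ := hlim 𝒰 h𝒰
  have hmono : Monotone (a s) := by
    intro θ θ' hθ
    refine le_of_tendsto_of_tendsto (ha s θ) (ha s θ') (h𝒰 ?_)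
    filter_upwards [eventually_ge_atTop 0] with y hy
    exact (hu.mono _).monotone (mul_le_mul_of_nonneg_right (exp_le_exp.2 hθ) hy)
  have hval : ∀ θ, (∃ P, IsLayer f (fun s => a (s + κ * θ) θ) P) → a s θ = g (s - κ * θ) := by
    rintro θ ⟨Q, hQ⟩
    have := IsLayer.unique hW hQ hg (s - κ * θ)
    simpa using this
  have hcont : Continuous fun θ => g (s - κ * θ) := hg.continuous.comp (by fun_prop)
  have hc0 : Tendsto (fun θ => g (s - κ * θ)) (nhds 0) (nhds (g s)) := by
    have := hcont.tendsto 0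
    simpa using this
  have e : a s 0 = g s := by
    refine le_antisymm ?_ ?_
    · by_contra! h
      obtain ⟨η, hη, hball⟩ := Metric.eventually_nhds_iff.1 (hc0.eventually (gt_mem_nhds h))
      obtain ⟨θ, hθ, hθ'⟩ := hd.exists_mem_open isOpen_Ioo (Set.nonempty_Ioo.2 hη)
      have h1 := hball (y := θ) (by rw [Real.dist_eq, sub_zero, abs_of_pos hθ'.1]; exact hθ'.2)
      rw [← hval θ hθ] at h1
      linarith [hmono hθ'.1.le]
    · by_contra! h
      obtain ⟨η, hη, hball⟩ := Metric.eventually_nhds_iff.1 (hc0.eventually (lt_mem_nhds h))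
      obtain ⟨θ, hθ, hθ'⟩ := hd.exists_mem_open isOpen_Ioo
        (Set.nonempty_Ioo.2 (show -η < 0 by linarith))
      have h1 := hball (y := θ)
        (by rw [Real.dist_eq, sub_zero, abs_of_neg hθ'.2]; linarith [hθ'.1])
      rw [← hval θ hθ] at h1
      linarith [hmono hθ'.2.le]
  have := ha s 0
  rw [e] at this
  simpa using this

/-- To the right of the branch the wave is close to `-1`. -/
theorem exists_le_of_right (hu : RegularWave f c K u ux uxx uy uyy) (hW : WellPotential F f f' B)
    (hk : RightBranch u k κ C Y₁) {δ : ℝ} (hδ : 0 < δ) :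
    ∃ R Y, ∀ x y, Y ≤ y → k y + R ≤ x → u x y < -1 + δ := by
  obtain ⟨g, P, hg, hlim⟩ := hu.exists_layer hW hk
  obtain ⟨s, -, hs⟩ := hg.exists_lt hW hδ
  obtain ⟨Y, hY⟩ := eventually_atTop.1 ((hlim s).eventually (gt_mem_nhds hs))
  refine ⟨s, max Y Y₁, fun x y hy hx => ?_⟩
  obtain ⟨y', hyy', hky'⟩ := hk.exists_eq (x := x - s) ((le_max_right _ _).trans hy) (by linarith)
  have := hY y' (((le_max_left _ _).trans hy).trans hyy')
  rw [hky', sub_add_cancel] at this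
  exact lt_of_le_of_lt ((hu.mono x).monotone hyy') this

/-- To the left of the branch the wave is close to `1`. -/
theorem exists_ge_of_left (hu : RegularWave f c K u ux uxx uy uyy) (hW : WellPotential F f f' B)
    (hk : RightBranch u k κ C Y₁) {δ : ℝ} (hδ : 0 < δ) (A : ℝ) :
    ∃ R Y, ∀ x y, Y ≤ y → A ≤ x → x ≤ k y - R → 1 - δ < u x y := by
  obtain ⟨g, P, hg, hlim⟩ := hu.exists_layer hW hk
  obtain ⟨s, -, hs⟩ := hg.exists_gt hW hδ
  obtain ⟨Y, hY⟩ := eventually_atTop.1 ((hlim s).eventually (lt_mem_nhds hs))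
  set Z := max Y Y₁ with hZ
  obtain ⟨Y', hY'⟩ := hu.exists_forall_gt hk.top (isCompact_Icc (a := A) (b := k Z + s))
    (show 1 - δ < 1 by linarith)
  refine ⟨-s, max Z Y', fun x y hy hAx hx => ?_⟩
  have hZy : Z ≤ y := (le_max_left _ _).trans hy
  rcases le_total (x - s) (k Z) with h | h
  · exact hY' x ⟨hAx, by linarith⟩ y ((le_max_right _ _).trans hy)
  · obtain ⟨y', hy', hky'⟩ := intermediate_value_Icc hZy
      (hk.cont.mono fun t ht => (le_max_right _ _).trans ht.1) ⟨h, (by linarith : x - s ≤ k y)⟩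
    have := hY y' ((le_max_left _ _).trans hy'.1)
    rw [hky', sub_add_cancel] at this
    exact lt_of_lt_of_le this ((hu.mono x).monotone hy'.2)

end RegularWave

theorem mul_sub_le_of_le_deriv {f f' : ℝ → ℝ} (hf : ∀ t, HasDerivAt f (f' t) t) {a b m : ℝ}
    (hm : ∀ t, a ≤ t → t ≤ b → m ≤ f' t) {s t : ℝ} (hs : a ≤ s) (hst : s ≤ t) (ht : t ≤ b) :
    m * (t - s) ≤ f t - f s := by
  refine (convex_Icc a b).mul_sub_le_image_sub_of_le_deriv
    (fun x _ => (hf x).continuousAt.continuousWithinAt)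
    (fun x _ => (hf x).differentiableAt.differentiableWithinAt) (fun x hx => ?_) s
    ⟨hs, hst.trans ht⟩ t ⟨hs.trans hst, ht⟩ hst
  rw [interior_Icc] at hx
  rw [(hf x).deriv]
  exact hm x hx.1.le hx.2.le

namespace RegularWave

variable {F f f' : ℝ → ℝ} {B c K : ℝ} {u ux uxx uy uyy : ℝ → ℝ → ℝ} {k k' : ℝ → ℝ}
  {κ C C' Y₁ Y₁' : ℝ}

theorem lip_y (hu : RegularWave f c K u ux uxx uy uyy) (x y y' : ℝ) :
    |u x y' - u x y| ≤ K * |y' - y| :=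
  abs_sub_le_of_abs_deriv_le (fun t => hu.jet.hy x t) (fun t => hu.abs_uy x t) y y'

theorem lt_one (hu : RegularWave f c K u ux uxx uy uyy) (x y : ℝ) : u x y < 1 :=
  lt_of_lt_of_le (hu.mono x (lt_add_one y)) (abs_le.1 (hu.bdd x (y + 1))).2

/-- Convergence as `y → -∞` is uniform on compact sets of abscissae. -/
theorem exists_forall_lt (hu : RegularWave f c K u ux uxx uy uyy)
    (hbot : ∀ x, Tendsto (u x) atBot (nhds (-1))) {s : Set ℝ} (hs : IsCompact s) {v : ℝ}
    (hv : -1 < v) : ∃ Y, ∀ x ∈ s, ∀ y ≤ Y, u x y < v := by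
  refine hs.induction_on (p := fun s => ∃ Y, ∀ x ∈ s, ∀ y ≤ Y, u x y < v) ⟨0, by simp⟩
    (fun s t hst ⟨Y, hY⟩ => ⟨Y, fun x hx => hY x (hst hx)⟩) ?_ ?_
  · rintro s t ⟨Y, hY⟩ ⟨Y', hY'⟩
    refine ⟨min Y Y', fun x hx y hy => ?_⟩
    rcases hx with hx | hx
    · exact hY x hx y (hy.trans (min_le_left _ _))
    · exact hY' x hx y (hy.trans (min_le_right _ _))
  · intro x _
    obtain ⟨Y, hY⟩ := ((hbot x).eventually (gt_mem_nhds hv)).exists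
    exact ⟨_, nhdsWithin_le_nhds ((hu.continuous_x Y).continuousAt.eventually (gt_mem_nhds hY)),
      Y, fun x' hx' y hy => lt_of_le_of_lt ((hu.mono x').monotone hy) hx'⟩

/-- At large heights the reflected wave lies above the wave in the transition region. -/
theorem exists_le_reflect_of_large (hu : RegularWave f c K u ux uxx uy uyy)
    (hW : WellPotential F f f' B) (hk : RightBranch u k κ C Y₁)
    (hk' : RightBranch (fun x y => u (0 - x) y) k' κ C' Y₁') {lam δ : ℝ} (hδ : 0 < δ)
    (hlam : C - C' < 2 * lam) :
    ∃ Y, ∀ x y, Y ≤ y → lam ≤ x → -1 + δ ≤ u x y → u (2 * lam - x) y ≤ 1 - δ →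
      u x y ≤ u (2 * lam - x) y := by
  have hu' := hu.reflect 0
  obtain ⟨g, P, hg, hlim⟩ := hu.exists_layer hW hk
  obtain ⟨g', P', hg', hlim'⟩ := hu'.exists_layer hW hk'
  obtain rfl : g = g' := funext fun s => IsLayer.unique hW hg hg' s
  obtain ⟨R, Y, hR⟩ := hu.exists_le_of_right hW hk hδ
  obtain ⟨R', Y', hR'⟩ := hu'.exists_ge_of_left hW hk' hδ (-lam)
  by_contra! h
  choose x y hy hx h1 h2 h3 using fun n : ℕ => h n
  have hytop : Tendsto y atTop atTop := tendsto_atTop_mono hy tendsto_natCast_atTop_atTop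
  have hdiff : Tendsto (fun n => k (y n) - k' (y n)) atTop (nhds (C - C')) := by
    have := (hk.lim.sub hk'.lim).comp hytop
    exact this.congr fun n => by simp
  have h𝒰 : (hyperfilter ℕ : Filter ℕ) ≤ atTop := Nat.hyperfilter_le_atTop
  have hbd : ∀ᶠ n in atTop, |x n - k (y n)| ≤ |R| + |2 * lam - R' - (C - C') - 1| := by
    filter_upwards [hytop.eventually_ge_atTop Y, hytop.eventually_ge_atTop Y',
      hdiff.eventually (gt_mem_nhds (show C - C' < C - C' + 1 by linarith))] with n e1 e2 e3
    have b1 : x n < k (y n) + R := by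
      by_contra! hc
      linarith [hR _ _ e1 hc, h1 n]
    have b2 : k' (y n) - R' < x n - 2 * lam := by
      by_contra! hc
      have := hR' _ _ e2 (by linarith [hx n]) hc
      rw [show 0 - (x n - 2 * lam) = 2 * lam - x n by ring] at this
      linarith [h2 n]
    have a1 := le_abs_self R
    have a2 := neg_abs_le (2 * lam - R' - (C - C') - 1)
    have a3 := abs_nonneg R
    have a4 := abs_nonneg (2 * lam - R' - (C - C') - 1)
    rw [abs_le]
    constructor <;> linarith
  obtain ⟨σ, hσ⟩ := (hyperfilter ℕ).exists_tendsto_of_abs_le (h𝒰 hbd)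
  have t1 : Tendsto (fun n => u (x n) (y n)) (hyperfilter ℕ) (nhds (g σ)) := by
    refine hu.tendsto_of_tendsto_sub ((hlim σ).comp (hytop.mono_left h𝒰)) ?_
    have := hσ.sub_const σ
    rw [sub_self] at this
    exact this.congr fun n => by ring
  have t2 : Tendsto (fun n => u (2 * lam - x n) (y n)) (hyperfilter ℕ)
      (nhds (g (σ + (C - C' - 2 * lam)))) := by
    have := hu'.tendsto_of_tendsto_sub (X' := fun n => x n - 2 * lam)
      ((hlim' (σ + (C - C' - 2 * lam))).comp (hytop.mono_left h𝒰)) (by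
        have := (hσ.add (hdiff.mono_left h𝒰)).sub_const (σ + (C - C'))
        rw [sub_self] at this
        exact this.congr fun n => by ring)
    refine this.congr fun n => ?_
    rw [show 0 - (x n - 2 * lam) = 2 * lam - x n by ring]
  have h4 := le_of_tendsto_of_tendsto t2 t1 (Eventually.of_forall fun n => (h3 n).le)
  have h5 := hg.strictAnti hW (show σ + (C - C' - 2 * lam) < σ by linarith)
  linarith

theorem jet_reflect_sub (hu : RegularWave f c K u ux uxx uy uyy) (lam t : ℝ) :
    PlaneJet (fun x y => u (2 * lam - x) (y + t) - u x y)
      (fun x y => -ux (2 * lam - x) (y + t) - ux x y)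
      (fun x y => uxx (2 * lam - x) (y + t) - uxx x y)
      (fun x y => uy (2 * lam - x) (y + t) - uy x y)
      (fun x y => uyy (2 * lam - x) (y + t) - uyy x y) := by
  have := ((hu.jet.reflect (2 * lam)).translate 0 t).sub hu.jet
  simpa only [add_zero] using this

theorem pde_reflect_sub (hu : RegularWave f c K u ux uxx uy uyy) (lam t x y : ℝ) :
    (uxx (2 * lam - x) (y + t) - uxx x y) + (uyy (2 * lam - x) (y + t) - uyy x y) +
      c * (uy (2 * lam - x) (y + t) - uy x y) = f (u (2 * lam - x) (y + t)) - f (u x y) := by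
  rw [← hu.pde, ← hu.pde]; ring

theorem le_reflect_of_transition (hu : RegularWave f c K u ux uxx uy uyy)
    (hW : WellPotential F f f' B) {lam δ m t : ℝ} (hm : 0 < m)
    (hm1 : ∀ s, -1 ≤ s → s ≤ -1 + δ → m ≤ f' s) (hm2 : ∀ s, 1 - δ ≤ s → s ≤ 1 → m ≤ f' s)
    (ht : 0 ≤ t) (h : ∀ x y, lam ≤ x → -1 + δ ≤ u x y → u (2 * lam - x) (y + t) ≤ 1 - δ →
      u x y ≤ u (2 * lam - x) (y + t)) (x y : ℝ) (hx : lam ≤ x) :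
    u x y ≤ u (2 * lam - x) (y + t) := by
  refine sub_nonneg.1 ((hu.jet_reflect_sub lam t).nonneg_of_halfPlane (A := 2) (c := c) hm
    (fun x y => ?_) (fun y => ?_) (fun x y hx hneg => ?_) x y hx)
  · have h1 := abs_le.1 (hu.bdd x y)
    have h2 := abs_le.1 (hu.bdd (2 * lam - x) (y + t))
    rw [abs_le]; constructor <;> linarith
  · rw [show 2 * lam - lam = lam by ring]
    exact sub_nonneg.2 ((hu.mono lam).monotone (by linarith))
  · rw [hu.pde_reflect_sub]
    have h1 := abs_le.1 (hu.bdd x y)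
    have h2 := abs_le.1 (hu.bdd (2 * lam - x) (y + t))
    by_cases c1 : -1 + δ ≤ u x y
    · have c2 : 1 - δ < u (2 * lam - x) (y + t) := by
        by_contra! c2
        linarith [h x y hx.le c1 c2]
      have := mul_sub_le_of_le_deriv hW.hf hm2 c2.le (by linarith) h1.2
      linarith
    · have := mul_sub_le_of_le_deriv hW.hf hm1 h2.1 (t := u x y) (by linarith) (by linarith)
      linarith

theorem lt_reflect_of_le (hu : RegularWave f c K u ux uxx uy uyy) (hW : WellPotential F f f' B)
    {lam t : ℝ} (h : ∀ x y, lam ≤ x → u x y ≤ u (2 * lam - x) (y + t)) {x₀ y₀ : ℝ}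
    (hx₀ : lam < x₀) (h₀ : u x₀ y₀ < u (2 * lam - x₀) (y₀ + t)) (x y : ℝ) (hx : lam < x) :
    u x y < u (2 * lam - x) (y + t) := by
  have hB : 0 ≤ B := (abs_nonneg _).trans (hW.bound 0 (by norm_num))
  refine sub_pos.1 ((hu.jet_reflect_sub lam t).pos_of_halfPlane (K := B + 1) (c := c)
    (by linarith) (fun x y hx => sub_nonneg.2 (h x y hx)) (fun x y hx => ?_) hx₀
    (sub_pos.2 h₀) x y hx)
  rw [hu.pde_reflect_sub]
  have h1 := hW.lipschitz.dist_le_mul _ (hu.bdd (2 * lam - x) (y + t)) _ (hu.bdd x y)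
  have h2 := h x y hx
  rw [Real.dist_eq, Real.dist_eq, Real.coe_toNNReal B hB,
    abs_of_nonneg (sub_nonneg.2 h2)] at h1
  have := le_abs_self (f (u (2 * lam - x) (y + t)) - f (u x y))
  nlinarith

/-- It suffices to compare the wave with its reflection on a compact box. -/
theorem exists_box (hu : RegularWave f c K u ux uxx uy uyy) (hW : WellPotential F f f' B)
    (hk : RightBranch u k κ C Y₁) (hk' : RightBranch (fun x y => u (0 - x) y) k' κ C' Y₁')
    (hbot : ∀ x, Tendsto (u x) atBot (nhds (-1))) {lam δ m : ℝ} (hδ : 0 < δ) (hm : 0 < m)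
    (hm1 : ∀ s, -1 ≤ s → s ≤ -1 + δ → m ≤ f' s) (hm2 : ∀ s, 1 - δ ≤ s → s ≤ 1 → m ≤ f' s)
    (hlam : C - C' < 2 * lam) :
    ∃ X a b, ∀ t, 0 ≤ t → (∀ x y, lam ≤ x → x ≤ X → a ≤ y → y ≤ b →
      u x y ≤ u (2 * lam - x) (y + t)) → ∀ x y, lam ≤ x → u x y ≤ u (2 * lam - x) (y + t) := by
  obtain ⟨Y, hY⟩ := hu.exists_le_reflect_of_large hW hk hk' hδ hlam
  obtain ⟨R, Y', hR⟩ := hu.exists_le_of_right hW hk hδ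
  set X := k (max Y Y') + R with hX
  obtain ⟨a, ha⟩ := hu.exists_forall_lt hbot (isCompact_Icc (a := lam) (b := X))
    (show -1 < -1 + δ by linarith)
  refine ⟨X, a, Y, fun t ht hbox => hu.le_reflect_of_transition hW hm hm1 hm2 ht ?_⟩
  intro x y hx h1 h2
  have h3 : u (2 * lam - x) y ≤ u (2 * lam - x) (y + t) := (hu.mono _).monotone (by linarith)
  rcases le_total Y y with hy | hy
  · exact (hY x y hy hx h1 (h3.trans h2)).trans h3
  · have hxX : x ≤ X := by
      by_contra! hc
      have h4 := hR x (max Y Y') (le_max_right _ _) hc.le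
      have h5 := (hu.mono x).monotone (hy.trans (le_max_left Y Y'))
      linarith
    have hay : a ≤ y := by
      by_contra! hc
      linarith [ha x ⟨hx, hxX⟩ y hc.le]
    exact hbox x y hx hxX hay hy

theorem le_reflect (hu : RegularWave f c K u ux uxx uy uyy) (hW : WellPotential F f f' B)
    (hk : RightBranch u k κ C Y₁) (hk' : RightBranch (fun x y => u (0 - x) y) k' κ C' Y₁')
    (hbot : ∀ x, Tendsto (u x) atBot (nhds (-1))) {lam δ m : ℝ} (hδ : 0 < δ) (hm : 0 < m)
    (hm1 : ∀ s, -1 ≤ s → s ≤ -1 + δ → m ≤ f' s) (hm2 : ∀ s, 1 - δ ≤ s → s ≤ 1 → m ≤ f' s)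
    (hlam : C - C' < 2 * lam) (x y : ℝ) (hx : lam ≤ x) : u x y ≤ u (2 * lam - x) y := by
  obtain ⟨X, a, b, hbox⟩ := hu.exists_box hW hk hk' hbot hδ hm hm1 hm2 hlam
  set T : Set ℝ := {t | 0 ≤ t ∧ ∀ x y, lam ≤ x → u x y ≤ u (2 * lam - x) (y + t)} with hT
  have hcy : ∀ x, Continuous (u x) := fun x =>
    continuous_iff_continuousAt.2 fun y => (hu.jet.hy x y).continuousAt
  have hclosed : IsClosed T := by
    have : T = Set.Ici 0 ∩ ⋂ x, ⋂ y, ⋂ _ : lam ≤ x, {t | u x y ≤ u (2 * lam - x) (y + t)} := by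
      ext t; simp [hT]
    rw [this]
    refine isClosed_Ici.inter (isClosed_iInter fun x => isClosed_iInter fun y =>
      isClosed_iInter fun _ => isClosed_le continuous_const ((hcy _).comp (by fun_prop)))
  have hbdd : BddBelow T := ⟨0, fun t ht => ht.1⟩
  have hne : T.Nonempty := by
    have hv : ∃ v < 1, ∀ x, lam ≤ x → x ≤ X → u x b ≤ v := by
      rcases lt_or_ge X lam with h | h
      · exact ⟨0, one_pos, fun x h1 h2 => by linarith⟩
      · obtain ⟨z, -, hz⟩ := (isCompact_Icc (a := lam) (b := X)).exists_isMaxOn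
          ⟨lam, le_rfl, h⟩ (hu.continuous_x b).continuousOn
        exact ⟨u z b, hu.lt_one z b, fun x h1 h2 => hz ⟨h1, h2⟩⟩
    obtain ⟨v, hv1, hv⟩ := hv
    obtain ⟨Z, hZ⟩ := hu.exists_forall_gt hk.top (isCompact_Icc (a := 2 * lam - X) (b := lam)) hv1
    refine ⟨max 0 (Z - a), le_max_left _ _, hbox _ (le_max_left _ _) ?_⟩
    intro x y h1 h2 h3 h4
    have h5 := hZ (2 * lam - x) ⟨by linarith, by linarith⟩ (y + max 0 (Z - a))
      (by linarith [le_max_right 0 (Z - a)])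
    exact ((hu.mono x).monotone h4).trans ((hv x h1 h2).trans h5.le)
  have hmem : sInf T ∈ T := hclosed.csInf_mem hne hbdd
  set τ := sInf T with hτ
  obtain ⟨hτ0, hle⟩ := hmem
  rcases hτ0.eq_or_lt with h0 | hτpos
  · have := hle x y hx
    rwa [← h0, add_zero] at this
  exfalso
  have hline : ∀ y, u lam y < u (2 * lam - lam) (y + τ) := fun y => by
    rw [show 2 * lam - lam = lam by ring]
    exact hu.mono lam (by linarith)
  obtain ⟨x₀, hx₀, h₀⟩ : ∃ x₀, lam < x₀ ∧ u x₀ 0 < u (2 * lam - x₀) (0 + τ) := by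
    have hc1 : Continuous fun x => u (2 * lam - x) (0 + τ) :=
      (hu.continuous_x (0 + τ)).comp (by fun_prop)
    have hev : ∀ᶠ x in nhds lam, u x 0 < u (2 * lam - x) (0 + τ) :=
      (isOpen_lt (hu.continuous_x 0) hc1).mem_nhds (hline 0)
    obtain ⟨x₀, h, hx₀⟩ := ((hev.filter_mono nhdsWithin_le_nhds).and
      (eventually_mem_nhdsWithin (s := Set.Ioi lam))).exists
    exact ⟨x₀, hx₀, h⟩
  have hpos : ∀ x y, lam ≤ x → u x y < u (2 * lam - x) (y + τ) := by
    intro x y hx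
    rcases hx.eq_or_lt with rfl | hx
    · exact hline y
    · exact hu.lt_reflect_of_le hW hle hx₀ h₀ x y hx
  obtain ⟨η, hη, hgap⟩ : ∃ η > 0, ∀ x y, lam ≤ x → x ≤ X → a ≤ y → y ≤ b →
      η ≤ u (2 * lam - x) (y + τ) - u x y := by
    have hcomp : IsCompact (Set.Icc lam X ×ˢ Set.Icc a b) := isCompact_Icc.prod isCompact_Icc
    rcases (Set.Icc lam X ×ˢ Set.Icc a b).eq_empty_or_nonempty with he | hne
    · refine ⟨1, one_pos, fun x y h1 h2 h3 h4 => ?_⟩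
      have : (x, y) ∈ Set.Icc lam X ×ˢ Set.Icc a b := ⟨⟨h1, h2⟩, h3, h4⟩
      rw [he] at this
      exact this.elim
    · obtain ⟨p, hp, hmin⟩ := hcomp.exists_isMinOn hne (hu.jet_reflect_sub lam τ).cont.continuousOn
      exact ⟨_, sub_pos.2 (hpos p.1 p.2 hp.1.1), fun x y h1 h2 h3 h4 =>
        hmin (show (x, y) ∈ Set.Icc lam X ×ˢ Set.Icc a b from ⟨⟨h1, h2⟩, h3, h4⟩)⟩
  have hK := hu.pos
  set t := max 0 (τ - η / K) with ht
  have ht0 : 0 ≤ t := le_max_left _ _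
  have htτ : t < τ := max_lt hτpos (by have : 0 < η / K := by positivity
                                       linarith)
  have htη : K * (τ - t) ≤ η := by
    have : τ - t ≤ η / K := by linarith [le_max_right 0 (τ - η / K)]
    rw [le_div_iff₀ hK] at this
    linarith
  have htT : t ∈ T := by
    refine ⟨ht0, hbox t ht0 fun x y h1 h2 h3 h4 => ?_⟩
    have h5 := hgap x y h1 h2 h3 h4
    have h6 := hu.lip_y (2 * lam - x) (y + t) (y + τ)
    rw [show y + τ - (y + t) = τ - t by ring, abs_of_pos (sub_pos.2 htτ)] at h6
    linarith [le_abs_self (u (2 * lam - x) (y + τ) - u (2 * lam - x) (y + t))]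
  exact absurd (csInf_le hbdd htT) (not_le.2 htτ)

/-- The moving plane reaches every position to the right of the asymptotic axis. -/
theorem lt_reflect (hu : RegularWave f c K u ux uxx uy uyy) (hW : WellPotential F f f' B)
    (hk : RightBranch u k κ C Y₁) (hk' : RightBranch (fun x y => u (0 - x) y) k' κ C' Y₁')
    (hbot : ∀ x, Tendsto (u x) atBot (nhds (-1))) {lam δ m : ℝ} (hδ : 0 < δ) (hm : 0 < m)
    (hm1 : ∀ s, -1 ≤ s → s ≤ -1 + δ → m ≤ f' s) (hm2 : ∀ s, 1 - δ ≤ s → s ≤ 1 → m ≤ f' s)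
    (hlam : C - C' < 2 * lam) (x y : ℝ) (hx : lam < x) : u x y < u (2 * lam - x) y := by
  have hle := hu.le_reflect hW hk hk' hbot hδ hm hm1 hm2 hlam
  have hdiff : Tendsto (fun y => k y - k' y) atTop (nhds (C - C')) :=
    (hk.lim.sub hk'.lim).congr fun n => by ring
  obtain ⟨y₀, h1, h2, h3, h4, h5⟩ := ((eventually_ge_atTop Y₁).and ((eventually_ge_atTop Y₁').and
    ((hk.tendsto_atTop.eventually_gt_atTop lam).and
    ((hk.tendsto_atTop.eventually_ge_atTop (2 * lam)).and
      (hdiff.eventually (gt_mem_nhds hlam)))))).exists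
  have h6 := hk'.pos y₀ h2 (k y₀ - 2 * lam) (by linarith) (by linarith)
  rw [show 0 - (k y₀ - 2 * lam) = 2 * lam - k y₀ by ring, ← hk.zero y₀ h1] at h6
  have := hu.lt_reflect_of_le hW (t := 0) (by simpa using hle) h3 (by simpa using h6) x y hx
  simpa using this

end RegularWave

theorem exists_rightBranch {u : ℝ → ℝ → ℝ} {k₁ k₂ : ℝ → ℝ} {Y₀ κ C : ℝ} (hκ : 0 < κ)
    (hcont : ∀ y, Continuous fun x => u x y) (hmono : ∀ x, StrictMono (u x))
    (htop : ∀ x, Tendsto (u x) atTop (nhds 1)) (hk₂ : ContinuousOn k₂ (Set.Ioi Y₀))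
    (hlevel : ∀ y, Y₀ < y → ∀ x, u x y = 0 ↔ x = k₁ y ∨ x = k₂ y)
    (hk₁ : Tendsto k₁ atTop atBot) (hlim : Tendsto (fun y => k₂ y - κ * log y) atTop (nhds C)) :
    ∃ Y, RightBranch u k₂ κ C Y := by
  have hk₂top : Tendsto k₂ atTop atTop := by
    have := hlim.add_atTop (tendsto_log_atTop.const_mul_atTop hκ)
    simpa using this
  obtain ⟨Y, hY⟩ := eventually_atTop.1 ((eventually_gt_atTop 0).and ((eventually_gt_atTop Y₀).and
    ((hk₁.eventually_lt_atBot 0).and ((hk₂top.eventually_ge_atTop 0).and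
      ((htop 0).eventually (lt_mem_nhds one_pos))))))
  have hY₀ : ∀ y, Y ≤ y → Y₀ < y := fun y hy => (hY y hy).2.1
  have hzero : ∀ y, Y ≤ y → u (k₂ y) y = 0 := fun y hy => (hlevel y (hY₀ y hy) _).2 (Or.inr rfl)
  have hc : ContinuousOn k₂ (Set.Ici Y) := hk₂.mono fun y hy => hY₀ y hy
  refine ⟨Y, hκ, (hY Y le_rfl).1, fun y hy => (hY y hy).2.2.2.1, ?_, hzero, ?_, hc, hlim, htop⟩
  · intro y hy x hx hxk
    obtain ⟨-, h1, h2, -, h4⟩ := hY y hy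
    by_contra! hneg
    obtain ⟨z, hz, huz⟩ := intermediate_value_Icc' hx (hcont y).continuousOn ⟨hneg, h4.le⟩
    rcases (hlevel y h1 z).1 huz with h | h
    · linarith [hz.1]
    · linarith [hz.2]
  · intro y hy x hx
    obtain ⟨z, hz, hzy⟩ := ((hk₂top.eventually_ge_atTop x).and (eventually_ge_atTop y)).exists
    obtain ⟨y', hy', h⟩ := intermediate_value_Icc hzy
      (hc.mono fun t ht => hy.trans ht.1) ⟨hx.le, hz⟩
    have hlt : y < y' := lt_of_le_of_ne hy'.1 (by rintro rfl; exact hx.ne h)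
    have := hmono x hlt
    have hx0 := hzero y' (hy.trans hy'.1)
    rw [h] at hx0
    rwa [hx0] at this

theorem RightBranch.le_of_reflect {u : ℝ → ℝ → ℝ} {k k' : ℝ → ℝ} {κ C C' Y Y' lam : ℝ}
    (hk : RightBranch u k κ C Y) (hk' : RightBranch (fun x y => u (0 - x) y) k' κ C' Y')
    (h : ∀ x y, lam < x → u x y < u (2 * lam - x) y) : C - C' ≤ 2 * lam := by
  by_contra! hlam
  have hdiff : Tendsto (fun y => k y - k' y) atTop (nhds (C - C')) :=
    (hk.lim.sub hk'.lim).congr fun n => by ring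
  obtain ⟨y, h1, h2, h3, h4⟩ := ((eventually_ge_atTop Y).and ((eventually_ge_atTop Y').and
    ((hk.tendsto_atTop.eventually_gt_atTop lam).and
      (hdiff.eventually (lt_mem_nhds hlam))))).exists
  have h5 := hk'.neg y h2 (k y - 2 * lam) (by linarith)
  have h6 := h (k y) y h3
  rw [hk.zero y h1] at h6
  rw [show 0 - (k y - 2 * lam) = 2 * lam - k y by ring] at h5
  linarith

theorem ContDiff.deriv_of_succ {g : ℝ → ℝ} {n : ℕ} (hg : ContDiff ℝ (n + 1) g) :
    ContDiff ℝ n (deriv g) := (contDiff_succ_iff_deriv.1 hg).2.2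

theorem ContDiff.planeJet {u : ℝ → ℝ → ℝ} (hu : ContDiff ℝ 3 fun p : ℝ × ℝ => u p.1 p.2) :
    PlaneJet u (pdx u) (pdxx u) (pdy u) (pdyy u) := by
  have hx : ∀ y, ContDiff ℝ 3 fun x => u x y := fun y => hu.comp (contDiff_id.prodMk contDiff_const)
  have hy : ∀ x, ContDiff ℝ 3 fun y => u x y := fun x => hu.comp (contDiff_const.prodMk contDiff_id)
  have hd : ∀ {g : ℝ → ℝ}, ContDiff ℝ 3 g → ∀ t, HasDerivAt g (deriv g t) t ∧
      HasDerivAt (deriv g) (deriv (deriv g) t) t := by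
    intro g hg t
    have h2 : ContDiff ℝ 2 (deriv g) := ContDiff.deriv_of_succ (n := 2) (by exact_mod_cast hg)
    exact ⟨(hg.differentiable (by norm_num) t).hasDerivAt,
      (h2.differentiable (by norm_num) t).hasDerivAt⟩
  exact ⟨hu.continuous, fun x y => (hd (hx y) x).1, fun x y => (hd (hx y) x).2,
    fun x y => (hd (hy x) y).1, fun x y => (hd (hy x) y).2⟩

theorem Continuous.exists_abs_le {g : ℝ → ℝ} (hg : Continuous g) :
    ∃ B, 0 ≤ B ∧ ∀ t, |t| ≤ 1 → |g t| ≤ B := by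
  obtain ⟨B, hB⟩ := (isCompact_Icc (a := (-1 : ℝ)) (b := 1)).exists_bound_of_continuousOn
    hg.continuousOn
  exact ⟨max B 0, le_max_right _ _, fun t ht => (hB t (abs_le.1 ht)).trans (le_max_left _ _)⟩

theorem BalancedDoubleWell.exists_wellPotential {F : ℝ → ℝ} (hF : BalancedDoubleWell F) :
    ∃ B, WellPotential F (deriv F) (deriv (deriv F)) B ∧ (∀ t, |t| ≤ 1 → |deriv F t| ≤ B) ∧
      ∀ s t, |s| ≤ 1 → |t| ≤ 1 →
        |deriv (deriv F) t - deriv (deriv F) s| ≤ B * |t - s| := by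
  obtain ⟨hC, h1, h2, -, -, h5, h6, h7, h8⟩ := hF
  have hC2 : ContDiff ℝ 2 (deriv F) := ContDiff.deriv_of_succ (n := 2) (by exact_mod_cast hC)
  have hC1 : ContDiff ℝ 1 (deriv (deriv F)) :=
    ContDiff.deriv_of_succ (n := 1) (by exact_mod_cast hC2)
  have hC0 : ContDiff ℝ 0 (deriv (deriv (deriv F))) :=
    ContDiff.deriv_of_succ (n := 0) (by exact_mod_cast hC1)
  obtain ⟨B₀, p₀, hB₀⟩ := hC2.continuous.exists_abs_le
  obtain ⟨B₁, p₁, hB₁⟩ := hC1.continuous.exists_abs_le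
  obtain ⟨B₂, p₂, hB₂⟩ := hC0.continuous.exists_abs_le
  have hle : ∀ t, |t| ≤ 1 → |deriv (deriv (deriv F)) t| ≤ B₀ + B₁ + B₂ := fun t ht => by
    linarith [hB₂ t ht]
  refine ⟨B₀ + B₁ + B₂, ⟨fun t => (hC.differentiable (by norm_num) t).hasDerivAt,
    fun t => (hC2.differentiable (by norm_num) t).hasDerivAt,
    fun t ht => by linarith [hB₁ t ht], h1, h2, fun s hs hs' => h5 s ⟨hs, hs'⟩,
    fun s hs hs' => h6 s ⟨hs, hs'⟩, h7, h8⟩, fun t ht => by linarith [hB₀ t ht], ?_⟩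
  intro s t hs ht
  exact (convex_Icc (-1 : ℝ) 1).norm_image_sub_le_of_norm_hasDerivWithin_le
    (fun x _ => (hC1.differentiable (by norm_num) x).hasDerivAt.hasDerivWithinAt)
    (fun x hx => hle x (abs_le.2 hx)) (abs_le.1 hs) (abs_le.1 ht)

theorem BalancedDoubleWell.exists_convex_near_wells {F : ℝ → ℝ} (hF : BalancedDoubleWell F) :
    ∃ δ > 0, ∃ m > 0, (∀ s, -1 ≤ s → s ≤ -1 + δ → m ≤ deriv (deriv F) s) ∧
      ∀ s, 1 - δ ≤ s → s ≤ 1 → m ≤ deriv (deriv F) s := by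
  obtain ⟨hC, -, -, h3, h4, -⟩ := hF
  have hC2 : ContDiff ℝ 2 (deriv F) := ContDiff.deriv_of_succ (n := 2) (by exact_mod_cast hC)
  have hC1 : ContDiff ℝ 1 (deriv (deriv F)) :=
    ContDiff.deriv_of_succ (n := 1) (by exact_mod_cast hC2)
  obtain ⟨a, ha, ha'⟩ := Metric.eventually_nhds_iff.1
    ((hC1.continuous.tendsto (-1)).eventually (lt_mem_nhds (half_lt_self h3)))
  obtain ⟨b, hb, hb'⟩ := Metric.eventually_nhds_iff.1
    ((hC1.continuous.tendsto 1).eventually (lt_mem_nhds (half_lt_self h4)))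
  have hab : 0 < min a b := lt_min ha hb
  refine ⟨min a b / 2, by linarith, min (deriv (deriv F) (-1) / 2) (deriv (deriv F) 1 / 2),
    lt_min (by linarith) (by linarith), fun s h1 h2 => ?_, fun s h1 h2 => ?_⟩
  · refine (min_le_left _ _).trans (ha' ?_).le
    have := min_le_left a b
    rw [Real.dist_eq, abs_lt]
    constructor <;> linarith
  · refine (min_le_right _ _).trans (hb' ?_).le
    have := min_le_right a b
    rw [Real.dist_eq, abs_lt]
    constructor <;> linarith

theorem IsSolution.exists_regularWave {F : ℝ → ℝ} {c : ℝ} {u : ℝ → ℝ → ℝ}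
    (hF : BalancedDoubleWell F) (hu : IsSolution F c u) :
    ∃ K, RegularWave (deriv F) c K u (pdx u) (pdxx u) (pdy u) (pdyy u) := by
  obtain ⟨hC, hpde, hbdd, hpos⟩ := hu
  obtain ⟨B, hW, hB, hlip⟩ := hF.exists_wellPotential
  have hjet := hC.planeJet
  obtain ⟨K, hK, a1, a2, a3⟩ := hjet.exists_lipschitz_bound (b := 0) (c := c) hW.hf hB
    hW.bound hlip hbdd (fun x y => by rw [zero_mul, add_zero]; exact hpde x y)
  obtain ⟨K', hK', b1, b2, b3⟩ := hjet.swap.exists_lipschitz_bound (b := c) (c := 0) hW.hf hB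
    hW.bound hlip (fun x y => hbdd y x)
    (fun x y => by rw [zero_mul, add_zero, ← hpde y x]; ring)
  have hl : ∀ h : ℝ, K * |h| ≤ (K + K') * |h| := fun h => by nlinarith [abs_nonneg h]
  have hr : ∀ h : ℝ, K' * |h| ≤ (K + K') * |h| := fun h => by nlinarith [abs_nonneg h]
  exact ⟨K + K', hjet, hpde, hbdd, fun x => strictMono_of_deriv_pos (hpos x), by linarith,
    fun x y => (a1 x y).trans (by linarith), fun x y h => (a2 x y h).trans (hl h),
    fun x y h => (a3 x y h).trans (hl h), fun x y => (b1 y x).trans (by linarith),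
    fun x y h => (b2 y x h).trans (hr h), fun x y h => (b3 y x h).trans (hr h)⟩

/-- The critical moving-plane position equals `(C₁ + C₂)/2`, where `C₁, C₂`
are the constants in the logarithmic asymptotics of the two branches of the
zero level set (Lemma 2.10). -/
theorem critical_moving_plane_position
    (F : ℝ → ℝ) (hF : BalancedDoubleWell F) (c : ℝ) (hc : 0 < c)
    (u : ℝ → ℝ → ℝ) (hu : IsTravelingWave F c u)
    (Y₀ : ℝ) (hY₀ : 0 < Y₀) (k₁ k₂ : ℝ → ℝ)
    (hk₁ : ContDiffOn ℝ 3 k₁ (Set.Ioi Y₀)) (hk₂ : ContDiffOn ℝ 3 k₂ (Set.Ioi Y₀))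
    (hlevel : ∀ y : ℝ, Y₀ < y → k₁ y < k₂ y ∧ {x : ℝ | u x y = 0} = {k₁ y, k₂ y})
    (C₁ C₂ : ℝ)
    (hC₁ : Tendsto (fun y =>
        k₁ y + (1 / (2 * Real.sqrt (deriv (deriv F) 1))) * Real.log y)
        atTop (nhds C₁))
    (hC₂ : Tendsto (fun y =>
        k₂ y - (1 / (2 * Real.sqrt (deriv (deriv F) 1))) * Real.log y)
        atTop (nhds C₂)) :
    sInf {lam : ℝ | ∀ x y : ℝ, lam < x → u x y < u (2 * lam - x) y} =
      (C₁ + C₂) / 2 := by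
  obtain ⟨hsol, htop, hbot⟩ := hu
  set κ := 1 / (2 * Real.sqrt (deriv (deriv F) 1)) with hκdef
  have hκ : 0 < κ := by
    have := Real.sqrt_pos.2 hF.2.2.2.2.1
    positivity
  obtain ⟨B, hW, -⟩ := hF.exists_wellPotential
  obtain ⟨δ, hδ, m, hm, hm1, hm2⟩ := hF.exists_convex_near_wells
  obtain ⟨K, hwave⟩ := hsol.exists_regularWave hF
  have hlog : Tendsto (fun y => κ * log y) atTop atTop := tendsto_log_atTop.const_mul_atTop hκ
  have hC₁' : Tendsto (fun y => -k₁ y - κ * log y) atTop (nhds (-C₁)) :=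
    hC₁.neg.congr fun y => by ring
  have hlev : ∀ y, Y₀ < y → ∀ x, u x y = 0 ↔ x = k₁ y ∨ x = k₂ y := fun y hy x => by
    have := Set.ext_iff.1 (hlevel y hy).2 x
    simpa using this
  obtain ⟨Y, hk⟩ := exists_rightBranch hκ hwave.continuous_x hwave.mono htop hk₂.continuousOn hlev
    (by
      have := hC₁.add_atBot (tendsto_neg_atTop_atBot.comp hlog)
      exact this.congr fun y => by simp) hC₂
  obtain ⟨Y', hk'⟩ := exists_rightBranch (u := fun x y => u (0 - x) y) (k₁ := fun y => -k₂ y)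
    (k₂ := fun y => -k₁ y) hκ (hwave.reflect 0).continuous_x (hwave.reflect 0).mono
    (fun x => htop (0 - x)) hk₁.continuousOn.neg
    (fun y hy x => by
      rw [hlev y hy, or_comm]
      refine or_congr ?_ ?_ <;> constructor <;> intro h <;> linarith)
    (tendsto_neg_atTop_atBot.comp hk.tendsto_atTop) hC₁'
  have hge : ∀ lam ∈ {lam : ℝ | ∀ x y : ℝ, lam < x → u x y < u (2 * lam - x) y},
      (C₁ + C₂) / 2 ≤ lam := fun lam hlam => by
    linarith [hk.le_of_reflect hk' hlam]
  have hgt : ∀ lam, (C₁ + C₂) / 2 < lam →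
      lam ∈ {lam : ℝ | ∀ x y : ℝ, lam < x → u x y < u (2 * lam - x) y} := fun lam hlam =>
    hwave.lt_reflect hW hk hk' hbot hδ hm hm1 hm2 (by linarith)
  refine csInf_eq_of_forall_ge_of_forall_gt_exists_lt ⟨_, hgt _ (lt_add_one _)⟩ hge fun w hw => ?_
  obtain ⟨lam, h1, h2⟩ := exists_between hw
  exact ⟨lam, hgt lam h1, h2⟩
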